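/- arXiv:2108.06888 — 10 statements merged into one kernel-verified Lean document; each statement's English description precedes it below -/
import Mathlib

section
/- Let P₁,…,Pₙ be n matrices in ℝ^{r₁×r₂}, each with orthonormal columns, and let a be a constant with 0 ≤ a ≤ 1/2 such that aff_∞(P_i,P_j) ≤ a for all 1 ≤ i ≠ j ≤ n. Then every vector g with unit ℓ₂-norm lying in the subspace span(P₁) + … + span(Pₙ) satisfies 1 − (n−1)a ≤ Σ_{i=1}^n ‖P_iᵀ g‖₂² ≤ 1 + (n−1)a. -/
open scoped RealInnerProductSpace

theorem aux_key {E F : Type*} [NormedAddCommGroup E] [InnerProductSpace ℝ E]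
    [NormedAddCommGroup F] [InnerProductSpace ℝ F] (n : ℕ)
    (P : Fin n → (E →ₗ[ℝ] F)) (hP : ∀ i x, ‖P i x‖ = ‖x‖) (a : ℝ) (ha0 : 0 ≤ a)
    (haff : ∀ i j, i ≠ j → ∀ x y : E, |⟪P i x, P j y⟫| ≤ a * ‖x‖ * ‖y‖) (x : Fin n → E) :
    |‖∑ i, P i (x i)‖ ^ 2 - ∑ i, ‖x i‖ ^ 2| ≤ ((n : ℝ) - 1) * a * ∑ i, ‖x i‖ ^ 2 := by
  have h1 : ‖∑ i, P i (x i)‖ ^ 2 - ∑ i, ‖x i‖ ^ 2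
      = ∑ i, ∑ j, (⟪P i (x i), P j (x j)⟫ - if i = j then ‖x i‖ ^ 2 else 0) := by
    rw [← real_inner_self_eq_norm_sq, sum_inner]
    simp only [inner_sum, Finset.sum_sub_distrib]
    simp
  have h2 : ((n : ℝ) - 1) * a * ∑ i, ‖x i‖ ^ 2
      = ∑ i, ∑ j, (a * (‖x i‖ ^ 2 + ‖x j‖ ^ 2) / 2 - if i = j then a * ‖x i‖ ^ 2 else 0) := by
    simp only [Finset.sum_sub_distrib, ← Finset.sum_div, ← Finset.mul_sum, Finset.sum_add_distrib]
    simp [← Finset.mul_sum]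
    ring
  rw [h1, h2]
  refine (Finset.abs_sum_le_sum_abs _ _).trans (Finset.sum_le_sum fun i _ => ?_)
  refine (Finset.abs_sum_le_sum_abs _ _).trans (Finset.sum_le_sum fun j _ => ?_)
  by_cases h : i = j
  · subst h
    simp [hP]
    linarith
  · simp only [h, if_false, sub_zero]
    refine (haff i j h _ _).trans ?_
    nlinarith [mul_nonneg ha0 (sq_nonneg (‖x i‖ - ‖x j‖))]

/-- Let `P₁,…,Pₙ` be `n` matrices in `ℝ^{r₁×r₂}` with orthonormal columns
(encoded as linear isometries `ℝ^{r₂} → ℝ^{r₁}`), and `0 ≤ a ≤ 1/2` with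
`aff_∞(P_i, P_j) ≤ a` for all `i ≠ j` (the largest singular value of `P_iᵀP_j`, i.e. the
supremum of `|⟪P_i x, P_j y⟫|` over unit vectors `x, y`).  Then every unit vector `g` in
`span(P₁) + … + span(Pₙ)` satisfies
`1 − (n−1)a ≤ ∑ i, ‖P_iᵀ g‖² ≤ 1 + (n−1)a`, where `P_iᵀ = adjoint (P_i)`. -/
theorem stmt_0 (r₁ r₂ n : ℕ)
    (P : Fin n → (EuclideanSpace ℝ (Fin r₂) →ₗ[ℝ] EuclideanSpace ℝ (Fin r₁)))
    (hP : ∀ i (x : EuclideanSpace ℝ (Fin r₂)), ‖P i x‖ = ‖x‖)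
    (a : ℝ) (ha0 : 0 ≤ a) (ha : a ≤ 1 / 2)
    (haff : ∀ i j, i ≠ j → ∀ (x y : EuclideanSpace ℝ (Fin r₂)),
      |⟪P i x, P j y⟫| ≤ a * ‖x‖ * ‖y‖)
    (g : EuclideanSpace ℝ (Fin r₁)) (hg : ‖g‖ = 1)
    (hmem : g ∈ ⨆ i, LinearMap.range (P i)) :
    1 - ((n : ℝ) - 1) * a ≤ ∑ i, ‖LinearMap.adjoint (P i) g‖ ^ 2 ∧
      ∑ i, ‖LinearMap.adjoint (P i) g‖ ^ 2 ≤ 1 + ((n : ℝ) - 1) * a := by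
  set S := ∑ i, ‖LinearMap.adjoint (P i) g‖ ^ 2 with hS
  have hS0 : 0 ≤ S := Finset.sum_nonneg fun i _ => sq_nonneg _
  constructor
  · have hx : ∃ x : Fin n → EuclideanSpace ℝ (Fin r₂), ∑ i, P i (x i) = g := by
      refine Submodule.iSup_induction _ (motive := fun g => ∃ x : Fin n → EuclideanSpace ℝ (Fin r₂),
        ∑ i, P i (x i) = g) hmem ?_ ?_ ?_
      · rintro i _ ⟨y, rfl⟩
        refine ⟨Pi.single i y, ?_⟩
        rw [Finset.sum_eq_single i]
        · simp
        · intro j _ hj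
          simp [Pi.single_eq_of_ne hj]
        · simp
      · exact ⟨0, by simp⟩
      · rintro _ _ ⟨u, rfl⟩ ⟨v, rfl⟩
        exact ⟨u + v, by simp [Finset.sum_add_distrib]⟩
    obtain ⟨x, hx⟩ := hx
    have k := aux_key n P hP a ha0 haff x
    rw [hx, hg, abs_le] at k
    set X := ∑ i, ‖x i‖ ^ 2 with hX
    have hX0 : 0 ≤ X := Finset.sum_nonneg fun i _ => sq_nonneg _
    have e : (1 : ℝ) = ∑ i, ⟪x i, LinearMap.adjoint (P i) g⟫ := by
      simp only [LinearMap.adjoint_inner_right]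
      rw [← sum_inner, hx, real_inner_self_eq_norm_sq, hg]
      norm_num
    have e1 : (1 : ℝ) ≤ ∑ i, ‖x i‖ * ‖LinearMap.adjoint (P i) g‖ := by
      rw [e]
      exact Finset.sum_le_sum fun i _ => real_inner_le_norm _ _
    have e2 := Finset.sum_mul_sq_le_sq_mul_sq Finset.univ (fun i => ‖x i‖)
      (fun i => ‖LinearMap.adjoint (P i) g‖)
    simp only [← hS, ← hX] at e2
    have e3 : 1 ≤ X * S := by nlinarith
    by_contra! hlt
    have hXpos : 0 < X := by
      rcases hX0.eq_or_lt with h | h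
      · rw [← h] at e3
        norm_num at e3
      · exact h
    nlinarith [mul_lt_mul_of_pos_left hlt hXpos]
  · have k := aux_key n P hP a ha0 haff (fun i => LinearMap.adjoint (P i) g)
    rw [← hS, abs_le] at k
    have e : S = ⟪g, ∑ i, P i (LinearMap.adjoint (P i) g)⟫ := by
      rw [inner_sum, hS]
      refine Finset.sum_congr rfl fun i _ => ?_
      rw [← LinearMap.adjoint_inner_left, real_inner_self_eq_norm_sq]
    have e1 := real_inner_le_norm g (∑ i, P i (LinearMap.adjoint (P i) g))
    rw [← e, hg, one_mul] at e1
    have e2 := pow_le_pow_left₀ hS0 e1 2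
    have hn : (0 : ℝ) ≤ n * a := by positivity
    by_contra! hlt
    have hSpos : 0 < S := by linarith
    nlinarith [mul_lt_mul_of_pos_left hlt hSpos]
end

section
/- Let b ∈ ℝ^m be a random vector uniformly distributed on the unit sphere S^{m−1}, and let λ₁,…,λ_m be constants with 1 ≥ λ₁ ≥ λ₂ ≥ … ≥ λ_m ≥ 0. Fix a constant g₁ ∈ (λ_m, λ₁) and set r_i = max(g₁² − λ_i², 0) and s_i = max(λ_i² − g₁², 0) for i = 1,…,m. Assume Σ_{i=1}^m r_i > Σ_{i=1}^m s_i. Then Σ_{i=1}^m λ_i² b_i² < g₁² holds with probability at least 1 − 2e^{−ε²}, where ε = (Σ_{i=1}^m (r_i − s_i)) / [ (√(Σ_{i=1}^m r_i²) + √(Σ_{i=1}^m s_i²)) + √( (√(Σ_{i=1}^m r_i²) + √(Σ_{i=1}^m s_i²))² + 2 s₁ Σ_{i=1}^m (r_i − s_i) ) ]. -/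
open MeasureTheory

/-- The rotation-invariant probability measure on the unit sphere `S^{m−1}` of `ℝ^m`,
encoded as a probability measure on `ℝ^m` concentrated on the unit sphere and invariant
under every linear isometry of `ℝ^m`. -/
def IsUniformOnSphere {m : ℕ} (ν : Measure (EuclideanSpace ℝ (Fin m))) : Prop :=
  IsProbabilityMeasure ν ∧ ν {x | ‖x‖ = 1}ᶜ = 0 ∧
    ∀ O : EuclideanSpace ℝ (Fin m) ≃ₗᵢ[ℝ] EuclideanSpace ℝ (Fin m),
      Measure.map O ν = ν

open ProbabilityTheory

lemma gq (c : ℝ) (hc : 2*c < 1) : ∫ x, Real.exp (c * x^2) ∂(gaussianReal 0 1) = Real.exp (-(1/2) * Real.log (1-2*c)) := by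
  rw [integral_gaussianReal_eq_integral_smul (by norm_num)]
  have : ∀ x : ℝ, gaussianPDFReal 0 1 x • Real.exp (c*x^2) = (√(2*Real.pi))⁻¹ * Real.exp (-(1/2-c)*x^2) := by
    intro x
    rw [gaussianPDFReal, smul_eq_mul, mul_assoc, ← Real.exp_add]
    simp only [NNReal.coe_one, mul_one]
    congr 2; ring
  simp_rw [this]
  rw [integral_const_mul, integral_gaussian, ← Real.sqrt_inv, ← Real.sqrt_mul (by positivity)]
  have h1 : 0 < 1 - 2*c := by linarith
  have : (2*Real.pi)⁻¹ * (Real.pi/(1/2-c)) = (1-2*c)⁻¹ := by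
    have := Real.pi_ne_zero
    have : 1/2 - c ≠ 0 := by linarith
    field_simp
  rw [this, Real.sqrt_eq_rpow, Real.rpow_def_of_pos (by positivity), Real.log_inv]
  congr 1; ring

lemma gqi (c : ℝ) (hc : 2*c < 1) : Integrable (fun x => Real.exp (c * x^2)) (gaussianReal 0 1) := by
  by_contra h
  have := gq c hc
  rw [integral_undef h] at this
  exact (Real.exp_pos _).ne this

lemma logb (c K : ℝ) (hc : 2*c < 1) (hK : 1 ≤ K) (hK' : 1 ≤ K * (1-2*c)) :
    -(1/2) * Real.log (1-2*c) ≤ c + c^2*K := by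
  rcases le_total c 0 with h | h
  · have h2 := Real.le_log_one_add_of_nonneg (x := -2*c) (by linarith)
    have h3 : -2*c - (2*c)^2/2 ≤ 2 * (-2*c)/(-2*c+2) := by
      rw [le_div_iff₀ (by linarith)]
      nlinarith [mul_nonneg (neg_nonneg.2 h) (sq_nonneg c)]
    have h4 : (1 + -2*c) = 1-2*c := by ring
    rw [h4] at h2
    nlinarith [mul_le_mul_of_nonneg_left hK (sq_nonneg c)]
  · have hp : 0 < 1-2*c := by linarith
    have h1 : 1 ≤ (1-2*c)⁻¹ := by rw [one_le_inv₀ hp]; linarith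
    have h2 := Real.self_le_sinh_iff.2 (Real.log_nonneg h1)
    rw [Real.sinh_log (by positivity), Real.log_inv, inv_inv] at h2
    have h3 : (1-2*c)⁻¹ ≤ K := by rw [inv_le_iff_one_le_mul₀ hp]; exact hK'
    have h5 : ((1-2*c)⁻¹ - (1-2*c))/2 = 2*c + 2*c^2*(1-2*c)⁻¹ := by
      field_simp; ring
    nlinarith [mul_le_mul_of_nonneg_left h3 (sq_nonneg c)]

lemma chern {m : ℕ} (a : Fin m → ℝ) (θ K : ℝ) (hθ : 0 ≤ θ) (hK : 1 ≤ K)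
    (h : ∀ i, 2*(θ * a i) < 1) (hK' : ∀ i, 1 ≤ K*(1-2*(θ * a i))) :
    (stdGaussian (EuclideanSpace ℝ (Fin m))).real {x | 0 ≤ ∑ i, a i * x i ^2} ≤
      Real.exp (θ * ∑ i, a i + θ^2 * K * ∑ i, a i ^2) := by
  rw [← map_pi_eq_stdGaussian, map_measureReal_apply (by fun_prop)
    (measurableSet_le (by fun_prop) (by fun_prop))]
  have e : ∀ x : Fin m → ℝ, Real.exp (θ * ∑ i, a i * x i ^2) = ∏ i, Real.exp ((θ * a i) * x i^2) := by
    intro x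
    rw [← Real.exp_sum, Finset.mul_sum]
    congr 1; apply Finset.sum_congr rfl; intros; ring
  have hi : Integrable (fun x : Fin m → ℝ => Real.exp (θ * ∑ i, a i * x i ^2)) (Measure.pi fun _ => gaussianReal 0 1) := by
    simp_rw [e]
    exact Integrable.fintype_prod (f := fun i x => Real.exp ((θ * a i) * x^2)) fun i => gqi _ (h i)
  have := measure_ge_le_exp_mul_mgf (X := fun x : Fin m → ℝ => ∑ i, a i * x i ^2) 0 hθ hi
  refine le_trans this ?_
  rw [mgf]
  simp_rw [e]
  rw [integral_fintype_prod_eq_prod (f := fun i x => Real.exp ((θ * a i) * x^2))]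
  simp only [mul_zero, Real.exp_zero, one_mul]
  simp_rw [fun i => gq _ (h i)]
  rw [← Real.exp_sum, Real.exp_le_exp]
  refine (Finset.sum_le_sum fun i _ => logb _ K (h i) hK (hK' i)).trans (le_of_eq ?_)
  rw [Finset.sum_add_distrib, Finset.mul_sum, Finset.mul_sum]
  congr 1; apply Finset.sum_congr rfl; intros; ring

lemma cf_inv {m : ℕ} {ν : Measure (EuclideanSpace ℝ (Fin m))} (hν : IsUniformOnSphere ν)
    {s t : EuclideanSpace ℝ (Fin m)} (h : ‖s‖ = ‖t‖) : charFun ν s = charFun ν t := by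
  set O := (Submodule.span ℝ {s - t})ᗮ.reflection with hO
  have hOs : O s = t := Submodule.reflection_sub h
  conv_rhs => rw [← hν.2.2 O]
  rw [charFun_apply, charFun_apply, integral_map (by fun_prop)
    (Measurable.aestronglyMeasurable (by fun_prop))]
  simp_rw [← hOs, LinearIsometryEquiv.inner_map_map]

lemma coupling {m : ℕ} {ν : Measure (EuclideanSpace ℝ (Fin m))} (hν : IsUniformOnSphere ν) :
    ((stdGaussian (EuclideanSpace ℝ (Fin m))).prod ν).map (fun p => ‖p.1‖ • p.2) =
      stdGaussian (EuclideanSpace ℝ (Fin m)) := by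
  have := hν.1
  have hmeas : Measurable (fun p : EuclideanSpace ℝ (Fin m) × EuclideanSpace ℝ (Fin m) =>
      ‖p.1‖ • p.2) := by fun_prop
  have := Measure.isProbabilityMeasure_map (μ := (stdGaussian (EuclideanSpace ℝ (Fin m))).prod ν)
    hmeas.aemeasurable
  have bdd : ∀ f : EuclideanSpace ℝ (Fin m) × EuclideanSpace ℝ (Fin m) → ℝ, Measurable f →
      Integrable (fun p => Complex.exp (f p * Complex.I))
        ((stdGaussian (EuclideanSpace ℝ (Fin m))).prod ν) := by
    intro f hf
    refine Integrable.of_bound (Measurable.aestronglyMeasurable (by fun_prop)) 1 ?_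
    filter_upwards with p
    rw [Complex.norm_exp_ofReal_mul_I]
  apply Measure.ext_of_charFun
  ext t
  rw [charFun_apply, integral_map hmeas.aemeasurable
    (Measurable.aestronglyMeasurable (by fun_prop)), integral_prod _ (bdd _ (by fun_prop))]
  have h1 : ∀ x : EuclideanSpace ℝ (Fin m),
      ∫ b, Complex.exp ((inner ℝ (‖x‖ • b) t : ℝ) * Complex.I) ∂ν =
      ∫ b, Complex.exp ((inner ℝ b (‖t‖ • x) : ℝ) * Complex.I) ∂ν := by
    intro x
    rw [← charFun_apply, cf_inv hν (t := ‖x‖ • t) (by simp [norm_smul, mul_comm]), charFun_apply]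
    simp_rw [real_inner_smul_left, real_inner_smul_right]
  simp_rw [h1]
  rw [integral_integral_swap (bdd (fun p => inner ℝ p.2 (‖t‖ • p.1)) (by fun_prop))]
  have h2 : ∀ᵐ b ∂ν, ∫ x, Complex.exp ((inner ℝ b (‖t‖ • x) : ℝ) * Complex.I)
      ∂(stdGaussian (EuclideanSpace ℝ (Fin m))) =
      charFun (stdGaussian (EuclideanSpace ℝ (Fin m))) t := by
    have : ∀ᵐ b ∂ν, ‖b‖ = 1 := hν.2.1
    filter_upwards [this] with b hb
    have : charFun (stdGaussian (EuclideanSpace ℝ (Fin m))) (‖t‖ • b) =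
      charFun (stdGaussian (EuclideanSpace ℝ (Fin m))) t := by
      simp [charFun_stdGaussian, norm_smul, hb]
    rw [← this, charFun_apply]
    simp_rw [real_inner_smul_right, real_inner_comm]
  rw [integral_congr_ae h2]
  simp

lemma sphere_le {m : ℕ} {ν : Measure (EuclideanSpace ℝ (Fin m))} (hν : IsUniformOnSphere ν)
    (a : Fin m → ℝ) : ν.real {x | 0 ≤ ∑ i, a i * x i ^ 2} ≤
      (stdGaussian (EuclideanSpace ℝ (Fin m))).real {x | 0 ≤ ∑ i, a i * x i ^ 2} := by
  have := hν.1
  have hms : MeasurableSet {x : EuclideanSpace ℝ (Fin m) | 0 ≤ ∑ i, a i * x i ^ 2} :=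
    measurableSet_le (by fun_prop) (by fun_prop)
  conv_rhs => rw [← coupling hν]
  rw [map_measureReal_apply (by fun_prop) hms]
  have : ν.real {x | 0 ≤ ∑ i, a i * x i ^ 2} =
    ((stdGaussian (EuclideanSpace ℝ (Fin m))).prod ν).real
      (Set.univ ×ˢ {x | 0 ≤ ∑ i, a i * x i ^ 2}) := by
    rw [measureReal_prod_prod]; simp
  rw [this]
  refine measureReal_mono ?_ (measure_ne_top _ _)
  rintro ⟨x, b⟩ ⟨-, hb⟩
  simp only [Set.mem_ofPred_eq, Set.mem_preimage, PiLp.smul_apply, smul_eq_mul] at hb ⊢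
  have e : ∑ i, a i * (‖x‖ * b i) ^ 2 = ‖x‖ ^ 2 * ∑ i, a i * b i ^ 2 := by
    rw [Finset.mul_sum]; apply Finset.sum_congr rfl; intros; ring
  rw [e]; positivity

lemma arith (A D s ε θ Q : ℝ) (hA : 0 < A) (hD : 0 < D) (hs : 0 ≤ s)
    (hε : ε = D / (A + Real.sqrt (A ^ 2 + 2 * s * D))) (hθ : θ = ε / (A + 2 * s * ε))
    (hQ : Q ≤ A ^ 2) :
    0 < ε ∧ θ * (-D) + θ ^ 2 * ((A + 2 * s * ε) / A) * Q ≤ -ε ^ 2 := by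
  set q := Real.sqrt (A ^ 2 + 2 * s * D) with hq
  have hq0 : 0 ≤ q := Real.sqrt_nonneg _
  have hq2 : q ^ 2 = A ^ 2 + 2 * s * D := Real.sq_sqrt (by positivity)
  have hε0 : 0 < ε := by rw [hε]; positivity
  have hDe : D = ε * (A + q) := by rw [hε]; field_simp
  have hqe : q = A + 2 * s * ε := by
    have : (q + A) * (q - A - 2 * s * ε) = 0 := by
      linear_combination hq2 + 2 * s * hDe
    rcases mul_eq_zero.1 this with h | h <;> linarith
  have hB : 0 < A + 2 * s * ε := by positivity
  refine ⟨hε0, ?_⟩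
  calc θ * (-D) + θ ^ 2 * ((A + 2 * s * ε) / A) * Q
      ≤ θ * (-D) + θ ^ 2 * ((A + 2 * s * ε) / A) * A ^ 2 := by gcongr
    _ = -ε ^ 2 := by
      rw [hθ, hDe, hqe]; field_simp; ring

/-- Let `b ∈ ℝ^m` be uniformly distributed on the unit sphere `S^{m−1}`, and
`1 ≥ λ₁ ≥ … ≥ λ_m ≥ 0`.  Fix `g₁ ∈ (λ_m, λ₁)`, set `r_i = (g₁² − λ_i²)₊` and
`s_i = (λ_i² − g₁²)₊`, and assume `∑ r_i > ∑ s_i`.  Then `∑ λ_i² b_i² < g₁²` with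
probability at least `1 − 2e^{−ε²}`, where
`ε = ∑(r_i−s_i) / [(√(∑r_i²)+√(∑s_i²)) + √((√(∑r_i²)+√(∑s_i²))² + 2s₁∑(r_i−s_i))]`. -/
theorem stmt_4 (m : ℕ) (hm : 0 < m)
    (ν : Measure (EuclideanSpace ℝ (Fin m))) (hν : IsUniformOnSphere ν)
    (lam : Fin m → ℝ) (hmono : Antitone lam)
    (hlam1 : lam ⟨0, hm⟩ ≤ 1) (hlamm : 0 ≤ lam ⟨m - 1, by omega⟩)
    (g₁ : ℝ) (hg₁l : lam ⟨m - 1, by omega⟩ < g₁) (hg₁u : g₁ < lam ⟨0, hm⟩)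
    (R S : Fin m → ℝ)
    (hR : ∀ i, R i = max (g₁ ^ 2 - lam i ^ 2) 0)
    (hS : ∀ i, S i = max (lam i ^ 2 - g₁ ^ 2) 0)
    (hRS : ∑ i, S i < ∑ i, R i)
    (ε : ℝ)
    (hε : ε = (∑ i, (R i - S i)) /
      ((Real.sqrt (∑ i, R i ^ 2) + Real.sqrt (∑ i, S i ^ 2)) +
        Real.sqrt ((Real.sqrt (∑ i, R i ^ 2) + Real.sqrt (∑ i, S i ^ 2)) ^ 2 +
          2 * S ⟨0, hm⟩ * ∑ i, (R i - S i)))) :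
    ENNReal.ofReal (1 - 2 * Real.exp (-ε ^ 2)) ≤
      ν {b | ∑ i, lam i ^ 2 * b i ^ 2 < g₁ ^ 2} := by
  have := hν.1
  have hmono0 : ∀ i, lam i ≤ lam ⟨0, hm⟩ := fun i => hmono (Fin.mk_le_of_le_val (by simp))
  have hpos : ∀ i, 0 ≤ lam i := fun i => hlamm.trans (hmono (by
    rw [Fin.le_def]; simp only; omega))
  have hR0 : ∀ i, 0 ≤ R i := fun i => by rw [hR]; exact le_max_right _ _
  have hS0 : ∀ i, 0 ≤ S i := fun i => by rw [hS]; exact le_max_right _ _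
  have hSm : ∀ i, S i ≤ S ⟨0, hm⟩ := fun i => by
    rw [hS, hS]
    have := pow_le_pow_left₀ (hpos i) (hmono0 i) 2
    gcongr
  have hdiff : ∀ i, S i - R i = lam i ^ 2 - g₁ ^ 2 := fun i => by
    rw [hS, hR]
    rcases le_total (lam i ^ 2) (g₁ ^ 2) with h | h
    · rw [max_eq_right (by linarith), max_eq_left (by linarith)]; ring
    · rw [max_eq_left (by linarith), max_eq_right (by linarith)]; ring
  set s := S ⟨0, hm⟩ with hs
  set D := ∑ i, (R i - S i) with hDdef
  set A := Real.sqrt (∑ i, R i ^ 2) + Real.sqrt (∑ i, S i ^ 2) with hAdef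
  have hD : 0 < D := by rw [hDdef, Finset.sum_sub_distrib]; linarith
  have hA : 0 < A := by
    have h1 : 0 < Real.sqrt (∑ i, R i ^ 2) := by
      apply Real.sqrt_pos.2
      have hRl : 0 < R ⟨m - 1, by omega⟩ := by
        rw [hR]; apply lt_max_of_lt_left
        have := pow_lt_pow_left₀ hg₁l hlamm (two_ne_zero)
        linarith
      exact lt_of_lt_of_le (pow_pos hRl 2)
        (Finset.single_le_sum (f := fun i => R i ^ 2) (fun i _ => sq_nonneg _) (Finset.mem_univ _))
    have h2 := Real.sqrt_nonneg (∑ i, S i ^ 2)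
    linarith
  have hQ : ∑ i, (S i - R i) ^ 2 ≤ A ^ 2 := by
    have h1 : ∑ i, (S i - R i) ^ 2 ≤ ∑ i, R i ^ 2 + ∑ i, S i ^ 2 := by
      rw [← Finset.sum_add_distrib]
      apply Finset.sum_le_sum
      intro i _
      nlinarith [mul_nonneg (hS0 i) (hR0 i)]
    have h2 := Real.sq_sqrt (Finset.sum_nonneg (s := Finset.univ) fun i _ => sq_nonneg (R i))
    have h3 := Real.sq_sqrt (Finset.sum_nonneg (s := Finset.univ) fun i _ => sq_nonneg (S i))
    have h4 := mul_nonneg (Real.sqrt_nonneg (∑ i, R i ^ 2)) (Real.sqrt_nonneg (∑ i, S i ^ 2))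
    rw [hAdef, add_sq]
    linarith
  have hs0 : 0 ≤ s := hS0 _
  obtain ⟨hε0, hmain⟩ := arith A D s ε _ _ hA hD hs0 hε rfl hQ
  set θ := ε / (A + 2 * s * ε) with hθ
  have hB : 0 < A + 2 * s * ε := by positivity
  have hθ0 : 0 ≤ θ := by positivity
  have hle : ∀ i, θ * (S i - R i) ≤ θ * s := fun i =>
    mul_le_mul_of_nonneg_left (by linarith [hSm i, hR0 i]) hθ0
  have h1s : 1 - 2 * (θ * s) = A / (A + 2 * s * ε) := by
    rw [hθ]; field_simp; ring
  have h1s0 : 0 < A / (A + 2 * s * ε) := by positivity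
  have key := chern (fun i => S i - R i) θ ((A + 2 * s * ε) / A) hθ0
    (by rw [le_div_iff₀ hA]; nlinarith [mul_nonneg hs0 hε0.le])
    (fun i => by have := hle i; linarith)
    (fun i => by
      have h2 := hle i
      have h3 : (A + 2 * s * ε) / A * (1 - 2 * (θ * s)) = 1 := by rw [h1s]; field_simp
      refine h3.symm.le.trans ?_
      gcongr)
  have hsum : ∑ i, (S i - R i) = -D := by
    rw [hDdef, ← Finset.sum_neg_distrib]; apply Finset.sum_congr rfl; intros; ring
  rw [hsum] at key
  have hfin := (sphere_le hν _).trans (key.trans (Real.exp_le_exp.2 hmain))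
  have hms : MeasurableSet {b : EuclideanSpace ℝ (Fin m) |
      ∑ i, lam i ^ 2 * b i ^ 2 < g₁ ^ 2} := measurableSet_lt (by fun_prop) (by fun_prop)
  have hcompl : ν.real {b | ∑ i, lam i ^ 2 * b i ^ 2 < g₁ ^ 2}ᶜ ≤
      ν.real {x | 0 ≤ ∑ i, (S i - R i) * x i ^ 2} := by
    refine ENNReal.toReal_mono (measure_ne_top _ _) (measure_mono_ae ?_)
    have : ∀ᵐ b ∂ν, ‖b‖ = 1 := hν.2.1
    filter_upwards [this] with b hb hbm
    have hbm' : ¬ (∑ i, lam i ^ 2 * b i ^ 2 < g₁ ^ 2) := hbm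
    change 0 ≤ ∑ i, (S i - R i) * b i ^ 2
    have hb2 : ∑ i, b i ^ 2 = 1 := by
      rw [← EuclideanSpace.real_norm_sq_eq, hb]; norm_num
    simp_rw [hdiff, sub_mul]
    rw [Finset.sum_sub_distrib, ← Finset.mul_sum, hb2]
    linarith
  rw [ENNReal.ofReal_le_iff_le_toReal (measure_ne_top _ _)]
  change _ ≤ ν.real _
  have := probReal_compl_eq_one_sub (μ := ν) hms
  have := Real.exp_pos (-ε ^ 2)
  linarith
end

section
/- Let U and Û₁ be matrices with orthonormal columns in ℝ^M such that the columns of Û₁ are orthogonal to span(U), and let W ⊆ ℝ^M be a subspace orthogonal to span(U) with aff_∞(Û₁, W) ≤ t₁, i.e., |⟨Û₁x, w⟩| ≤ t₁‖x‖₂‖w‖₂ for all x and all w ∈ W. Then every unit ℓ₂-norm vector δ̂ ∈ span(U) ⊕ W, written as δ̂ = δ_U + δ_C with δ_U the orthogonal projection of δ̂ onto span(U) and δ_C ∈ W, satisfies ‖[U, Û₁]ᵀ δ̂‖₂² = ‖Uᵀδ̂‖₂² + ‖Û₁ᵀδ̂‖₂² ≤ 1 − (1 − t₁²)‖δ_C‖₂².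 -/
open scoped RealInnerProductSpace

/-- Let `U` and `Û₁` have orthonormal columns in `ℝ^M` with the columns of
`Û₁` orthogonal to `span(U)`, and let `W` be a subspace orthogonal to `span(U)` with
`aff_∞(Û₁, W) ≤ t₁` (i.e. `|⟪x, w⟫| ≤ t₁‖x‖‖w‖` for all `x ∈ span(Û₁)` and `w ∈ W`).
Then every unit vector `δ̂ ∈ span(U) ⊕ W`, written `δ̂ = δ_U + δ_C` with `δ_U` the
orthogonal projection of `δ̂` onto `span(U)` and `δ_C ∈ W`, satisfies
`‖[U, Û₁]ᵀδ̂‖² = ∑_i ⟪U_i, δ̂⟫² + ∑_j ⟪(Û₁)_j, δ̂⟫² ≤ 1 − (1 − t₁²)‖δ_C‖²`. -/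
theorem stmt_9 (M s p : ℕ)
    (U : Fin s → EuclideanSpace ℝ (Fin M))
    (Uh₁ : Fin p → EuclideanSpace ℝ (Fin M))
    (hU : Orthonormal ℝ U) (hUh₁ : Orthonormal ℝ Uh₁)
    (hperp : ∀ i j, ⟪U i, Uh₁ j⟫ = 0)
    (W : Submodule ℝ (EuclideanSpace ℝ (Fin M)))
    (hWperp : ∀ w ∈ W, ∀ i, ⟪U i, w⟫ = 0)
    (t₁ : ℝ)
    (haff : ∀ x ∈ Submodule.span ℝ (Set.range Uh₁), ∀ w ∈ W,
      |⟪x, w⟫| ≤ t₁ * ‖x‖ * ‖w‖)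
    (δhat δU δC : EuclideanSpace ℝ (Fin M)) (hδ : ‖δhat‖ = 1)
    (hmem : δhat ∈ Submodule.span ℝ (Set.range U) ⊔ W)
    (hδU : δU = (Submodule.orthogonalProjectionOnto (Submodule.span ℝ (Set.range U)) δhat :
      EuclideanSpace ℝ (Fin M)))
    (hsplit : δhat = δU + δC) (hδCW : δC ∈ W) :
    (∑ i, ⟪U i, δhat⟫ ^ 2) + ∑ j, ⟪Uh₁ j, δhat⟫ ^ 2 ≤ 1 - (1 - t₁ ^ 2) * ‖δC‖ ^ 2 := by
  have hmemU : δU ∈ Submodule.span ℝ (Set.range U) := by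
    rw [hδU]; exact Submodule.coe_mem _
  have key : ∀ v : EuclideanSpace ℝ (Fin M), (∀ i, ⟪U i, v⟫ = 0) → ⟪δU, v⟫ = 0 := by
    intro v hv
    clear hδU hsplit
    induction hmemU using Submodule.span_induction with
    | mem x hx => obtain ⟨i, rfl⟩ := hx; exact hv i
    | zero => simp
    | add x y _ _ hx hy => rw [inner_add_left, hx, hy, add_zero]
    | smul a x _ hx => rw [real_inner_smul_left, hx, mul_zero]
  have hUC : ⟪δU, δC⟫ = 0 := key _ (hWperp δC hδCW)
  have hpyth : ‖δU‖ ^ 2 + ‖δC‖ ^ 2 = 1 := by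
    have h := norm_add_sq_real δU δC
    rw [← hsplit, hδ, hUC] at h
    linarith
  have h1 : ∑ i, ⟪U i, δhat⟫ ^ 2 ≤ ‖δU‖ ^ 2 := by
    have h := hU.sum_inner_products_le δU (s := Finset.univ)
    refine le_trans (le_of_eq (Finset.sum_congr rfl fun i _ => ?_)) h
    rw [hsplit, inner_add_right, hWperp δC hδCW i, add_zero, Real.norm_eq_abs, sq_abs]
  have h2 : ∀ j, ⟪Uh₁ j, δhat⟫ = ⟪Uh₁ j, δC⟫ := by
    intro j
    rw [hsplit, inner_add_right, real_inner_comm, key _ (fun i => hperp i j), zero_add]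
  simp only [h2]
  set S := ∑ j, ⟪Uh₁ j, δC⟫ ^ 2 with hS
  have hS0 : 0 ≤ S := Finset.sum_nonneg fun _ _ => sq_nonneg _
  set x := ∑ j, ⟪Uh₁ j, δC⟫ • Uh₁ j with hx
  have hxm : x ∈ Submodule.span ℝ (Set.range Uh₁) :=
    Submodule.sum_mem _ fun j _ =>
      Submodule.smul_mem _ _ (Submodule.subset_span (Set.mem_range_self j))
  have hxC : ⟪x, δC⟫ = S := by
    rw [hx, sum_inner, hS]
    refine Finset.sum_congr rfl fun j _ => ?_
    rw [real_inner_smul_left, sq]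
  have hxx : ‖x‖ ^ 2 = S := by
    rw [← real_inner_self_eq_norm_sq, hx, hUh₁.inner_sum, hS]
    refine Finset.sum_congr rfl fun j _ => ?_
    simp [sq]
  have h3 := haff x hxm δC hδCW
  rw [hxC] at h3
  have h4 : S ^ 2 ≤ S * (t₁ ^ 2 * ‖δC‖ ^ 2) := by
    have h := pow_le_pow_left₀ (abs_nonneg S) h3 2
    rw [sq_abs, mul_pow, mul_pow, hxx] at h
    linarith
  have h5 : S ≤ t₁ ^ 2 * ‖δC‖ ^ 2 := by
    rcases hS0.eq_or_lt with h0 | h0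
    · rw [← h0]; positivity
    · rw [sq S] at h4
      exact le_of_mul_le_mul_left h4 h0
  linarith
end

section
/- Let W ⊆ ℝ^M be a linear subspace with orthogonal projection operator P, and let q ∈ ℝ^M be a unit ℓ₂-norm vector with ‖Pq‖₂ ≤ t₃ < 1 (so q − Pq ≠ 0). Set q̂ = (q − Pq)/‖q − Pq‖₂. Then for every vector δ ∈ ℝ^M with ⟨q, δ⟩ = 0, |⟨q̂, δ⟩| ≤ √(t₃²/(1 − t₃²)) · ‖Pδ‖₂; equivalently, the norm of the orthogonal projection of δ onto span(q̂) is at most √(t₃²/(1−t₃²))·‖Pδ‖₂. -/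
open scoped RealInnerProductSpace

/-- Let `W ⊆ ℝ^M` be a subspace with orthogonal projection `P`, and let `q`
be a unit vector with `‖Pq‖ ≤ t₃ < 1`.  Set `q̂ = (q − Pq)/‖q − Pq‖`.  Then every `δ` with
`⟪q, δ⟫ = 0` satisfies `|⟪q̂, δ⟫| ≤ √(t₃²/(1 − t₃²)) · ‖Pδ‖`. -/
theorem stmt_10 (M : ℕ) (W : Submodule ℝ (EuclideanSpace ℝ (Fin M)))
    (q : EuclideanSpace ℝ (Fin M)) (t₃ : ℝ) (hq : ‖q‖ = 1)
    (hPq : ‖(Submodule.orthogonalProjectionOnto W q : EuclideanSpace ℝ (Fin M))‖ ≤ t₃) (ht₃ : t₃ < 1)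
    (δ : EuclideanSpace ℝ (Fin M)) (hδ : ⟪q, δ⟫ = 0) :
    |⟪(‖q - (Submodule.orthogonalProjectionOnto W q : EuclideanSpace ℝ (Fin M))‖)⁻¹ •
        (q - (Submodule.orthogonalProjectionOnto W q : EuclideanSpace ℝ (Fin M))), δ⟫| ≤
      Real.sqrt (t₃ ^ 2 / (1 - t₃ ^ 2)) *
        ‖(Submodule.orthogonalProjectionOnto W δ : EuclideanSpace ℝ (Fin M))‖ := by
  have key : ∀ (w v : EuclideanSpace ℝ (Fin M)), w ∈ W →
      ⟪w, v - (Submodule.orthogonalProjectionOnto W v : EuclideanSpace ℝ (Fin M))⟫ = 0 := by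
    intro w v hw
    exact (Submodule.mem_orthogonal W _).1 (Submodule.sub_starProjection_mem_orthogonal v) w hw
  have h1 := key _ q (Submodule.orthogonalProjectionOnto W q).2
  have h2 := key _ δ (Submodule.orthogonalProjectionOnto W q).2
  generalize (Submodule.orthogonalProjectionOnto W q : EuclideanSpace ℝ (Fin M)) = p at *
  generalize (Submodule.orthogonalProjectionOnto W δ : EuclideanSpace ℝ (Fin M)) = d at *
  have ha := norm_nonneg p
  have hn : ‖q - p‖ ^ 2 = 1 - ‖p‖ ^ 2 := by
    have h3 := norm_add_sq_real p (q - p)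
    rw [h1, add_sub_cancel, hq] at h3
    linarith
  have hin : ⟪q - p, δ⟫ = - ⟪p, d⟫ := by
    rw [inner_sub_right] at h2
    rw [inner_sub_left, hδ]
    linarith
  have hpos : 0 < 1 - t₃ ^ 2 := by nlinarith
  have hle : ‖p‖ ^ 2 ≤ t₃ ^ 2 := by nlinarith
  have hc : ‖q - p‖⁻¹ * ‖p‖ ≤ Real.sqrt (t₃ ^ 2 / (1 - t₃ ^ 2)) := by
    apply Real.le_sqrt_of_sq_le
    rw [mul_pow, inv_pow, hn, inv_mul_eq_div]
    exact div_le_div₀ (sq_nonneg _) hle hpos (by linarith)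
  rw [real_inner_smul_left, hin, abs_mul, abs_neg, abs_of_nonneg (inv_nonneg.2 (norm_nonneg _))]
  calc ‖q - p‖⁻¹ * |⟪p, d⟫| ≤ ‖q - p‖⁻¹ * (‖p‖ * ‖d‖) :=
        mul_le_mul_of_nonneg_left (abs_real_inner_le_norm p d) (inv_nonneg.2 (norm_nonneg _))
    _ = (‖q - p‖⁻¹ * ‖p‖) * ‖d‖ := by ring
    _ ≤ _ := mul_le_mul_of_nonneg_right hc (norm_nonneg _)
end

section
/- Under the deterministic data model with t₂ ≤ 1/2, let δ be any nonzero vector in S_{-1} = ⊕_{k=2}^K S_k, and let δ_C denote the component of δ/‖δ‖₂ orthogonal to span(U). Then the ℓ₁-norm of the inner products of δ with the columns of D_{-1} satisfies Σ_{columns d of D_{-1}} |δᵀd| ≥ h₁ · ‖δ‖₂ · √( (K−1) − [K−2 + (K−2)t₂]·‖δ_C‖₂² ). -/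
open scoped RealInnerProductSpace
open Finset

lemma aux_gersh {E ι : Type*} [NormedAddCommGroup E] [InnerProductSpace ℝ E] [DecidableEq ι]
    (I : Finset ι) (x : ι → E) (t : ℝ) (ht : 0 ≤ t)
    (h : ∀ k ∈ I, ∀ l ∈ I, k ≠ l → |⟪x k, x l⟫| ≤ t * ‖x k‖ * ‖x l‖) :
    (1 - ((I.card : ℝ) - 1) * t) * ∑ k ∈ I, ‖x k‖ ^ 2 ≤ ‖∑ k ∈ I, x k‖ ^ 2 := by
  have e1 : ‖∑ k ∈ I, x k‖ ^ 2 = ∑ k ∈ I, ∑ l ∈ I, ⟪x k, x l⟫ := by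
    rw [← real_inner_self_eq_norm_sq, sum_inner]
    simp_rw [inner_sum]
  have e2 : ∑ k ∈ I, ∑ l ∈ I, ((if k = l then (1 + t) * ‖x k‖ ^ 2 else 0) - t * (‖x k‖ * ‖x l‖))
      ≤ ∑ k ∈ I, ∑ l ∈ I, ⟪x k, x l⟫ := by
    refine Finset.sum_le_sum fun k hk => Finset.sum_le_sum fun l hl => ?_
    by_cases hkl : k = l
    · subst hkl
      rw [if_pos rfl, real_inner_self_eq_norm_sq]
      apply le_of_eq; ring
    · rw [if_neg hkl]
      have := (abs_le.1 (h k hk l hl hkl)).1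
      linarith
  have e3 : ∑ k ∈ I, ∑ l ∈ I, ((if k = l then (1 + t) * ‖x k‖ ^ 2 else 0) - t * (‖x k‖ * ‖x l‖))
      = (1 + t) * ∑ k ∈ I, ‖x k‖ ^ 2 - t * (∑ k ∈ I, ‖x k‖) ^ 2 := by
    simp_rw [Finset.sum_sub_distrib]
    rw [sq (∑ k ∈ I, ‖x k‖), Finset.sum_mul_sum]
    simp_rw [Finset.mul_sum]
    congr 1
    refine Finset.sum_congr rfl fun k hk => ?_
    rw [Finset.sum_ite_eq, if_pos hk]
  have e4 := sq_sum_le_card_mul_sum_sq (s := I) (f := fun k => ‖x k‖)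
  have e5 := mul_le_mul_of_nonneg_left e4 ht
  rw [e1]
  refine le_trans ?_ e2
  rw [e3]
  linarith

lemma aux_mink {ι : Type*} (I : Finset ι) (a q : ι → ℝ) (r : ℝ) (ha : ∀ k, 0 ≤ a k)
    (h : ∀ k, a k ^ 2 = r ^ 2 + q k ^ 2) :
    (I.card : ℝ) ^ 2 * r ^ 2 + (∑ k ∈ I, q k) ^ 2 ≤ (∑ k ∈ I, a k) ^ 2 := by
  have : (I.card : ℝ) ^ 2 * r ^ 2 + (∑ k ∈ I, q k) ^ 2
      = ∑ k ∈ I, ∑ l ∈ I, (r ^ 2 + q k * q l) := by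
    simp_rw [Finset.sum_add_distrib]
    rw [sq (∑ k ∈ I, q k), Finset.sum_mul_sum]
    simp; ring
  rw [this, sq (∑ k ∈ I, a k), Finset.sum_mul_sum]
  refine Finset.sum_le_sum fun k _ => Finset.sum_le_sum fun l _ => ?_
  refine le_trans (le_abs_self _) (abs_le_of_sq_le_sq ?_ (mul_nonneg (ha k) (ha l)))
  rw [mul_pow, h k, h l]
  nlinarith [sq_nonneg (r * q k - r * q l)]

/-- lower bound on the sum of projections -/
lemma aux_proj {E ι : Type*} [NormedAddCommGroup E] [InnerProductSpace ℝ E]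
    [FiniteDimensional ℝ E] [DecidableEq ι]
    (I : Finset ι) (V : ι → Submodule ℝ E) (t : ℝ) (ht : 0 ≤ t)
    (h : ∀ k l, k ≠ l → ∀ x ∈ V k, ∀ y ∈ V l, |⟪x, y⟫| ≤ t * ‖x‖ * ‖y‖)
    (v : E) (hv : v ∈ ⨆ k ∈ I, V k) :
    (1 - ((I.card : ℝ) - 1) * t) * ‖v‖ ^ 2 ≤ (∑ k ∈ I, ‖(V k).starProjection v‖) ^ 2 := by
  set β := 1 - ((I.card : ℝ) - 1) * t with hβ
  rcases le_or_gt β 0 with hb | hb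
  · exact le_trans (mul_nonpos_of_nonpos_of_nonneg hb (sq_nonneg _)) (sq_nonneg _)
  obtain ⟨μ, hμ⟩ := (Submodule.mem_iSup_finset_iff_exists_sum V v).1 hv
  set x : ι → E := fun k => (μ k : E) with hx
  have hG := aux_gersh I x t ht (fun k _ l _ hkl => h k l hkl _ (μ k).2 _ (μ l).2)
  have hxs : ∑ k ∈ I, x k = v := hμ
  rw [hxs, ← hβ] at hG
  have hc : ‖v‖ ^ 2 ≤ ∑ k ∈ I, ‖x k‖ * ‖(V k).starProjection v‖ := by
    rw [← real_inner_self_eq_norm_sq]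
    nth_rewrite 1 [← hxs]
    rw [sum_inner]
    refine Finset.sum_le_sum fun k _ => ?_
    have : ⟪x k, v⟫ = ⟪x k, (V k).starProjection v⟫ := by
      have h0 := Submodule.sub_starProjection_mem_orthogonal (K := V k) v
      have := (Submodule.mem_orthogonal _ _).1 h0 (x k) (μ k).2
      rw [inner_sub_right] at this
      linarith
    rw [this]
    exact real_inner_le_norm _ _
  have hCS := Finset.sum_mul_sq_le_sq_mul_sq I (fun k => ‖x k‖)
    (fun k => ‖(V k).starProjection v‖)
  have hQ : ∑ k ∈ I, ‖(V k).starProjection v‖ ^ 2 ≤ (∑ k ∈ I, ‖(V k).starProjection v‖) ^ 2 :=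
    Finset.sum_sq_le_sq_sum_of_nonneg (fun k _ => norm_nonneg _)
  refine le_trans ?_ hQ
  set Q := ∑ k ∈ I, ‖(V k).starProjection v‖ ^ 2
  set X := ∑ k ∈ I, ‖x k‖ ^ 2
  have hQ0 : 0 ≤ Q := Finset.sum_nonneg fun _ _ => sq_nonneg _
  have hc2 : (‖v‖ ^ 2) ^ 2 ≤ X * Q := le_trans (pow_le_pow_left₀ (sq_nonneg _) hc 2) hCS
  rcases (sq_nonneg ‖v‖).eq_or_lt with h0 | h0
  · rw [← h0]; simpa using hQ0
  · have h1 := mul_le_mul_of_nonneg_left hc2 hb.le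
    have h2 := mul_le_mul_of_nonneg_right hG hQ0
    have h3 : ‖v‖ ^ 2 * (β * ‖v‖ ^ 2) ≤ ‖v‖ ^ 2 * Q := by nlinarith
    exact le_of_mul_le_mul_left h3 h0

/-- deterministic model, lower bound for out-of-cluster inner products:
columns `d j` of `D` are unit vectors in the union of `K` subspaces
`S k = span[U, Û_k]`; the cluster `S₁` is indexed by `0 : Fin K`.  `h₁` is a lower bound
for `‖δᵀD_k‖₁` over unit `δ ∈ S k`, and the pairwise affinities of the innovation
components satisfy `aff_∞(Û_i, Û_j) ≤ t₂ ≤ 1/2`.  For any nonzero `δ ∈ S_{−1} = ⊕_{k≥2} S k`,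
with `δ_C` the component of `δ/‖δ‖` orthogonal to `span U`,
`∑_{columns of D_{−1}} |δᵀd| ≥ h₁‖δ‖√((K−1) − [K−2+(K−2)t₂]‖δ_C‖²)`. -/
theorem stmt_11 (Mdim N K s : ℕ) [NeZero K] (p : Fin K → ℕ)
    (U : Fin s → EuclideanSpace ℝ (Fin Mdim))
    (Uh : (k : Fin K) → Fin (p k) → EuclideanSpace ℝ (Fin Mdim))
    (hU : Orthonormal ℝ U)
    (hUh : ∀ k, Orthonormal ℝ (Uh k))
    (hperp : ∀ k j i, ⟪U i, Uh k j⟫ = 0)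
    (S : Fin K → Submodule ℝ (EuclideanSpace ℝ (Fin Mdim)))
    (hS : ∀ k, S k = Submodule.span ℝ (Set.range U ∪ Set.range (Uh k)))
    (d : Fin N → EuclideanSpace ℝ (Fin Mdim))
    (label : Fin N → Fin K)
    (hdnorm : ∀ j, ‖d j‖ = 1)
    (hdmem : ∀ j, d j ∈ S (label j))
    (h₁ t₂ : ℝ) (ht₂0 : 0 ≤ t₂) (ht₂ : t₂ ≤ 1 / 2)
    (hh₁ : ∀ k, ∀ δ ∈ S k, ‖δ‖ = 1 →
      h₁ ≤ ∑ j ∈ univ.filter (fun j => label j = k), |⟪δ, d j⟫|)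
    (haff₂ : ∀ k l : Fin K, k ≠ l → ∀ x ∈ Submodule.span ℝ (Set.range (Uh k)),
      ∀ y ∈ Submodule.span ℝ (Set.range (Uh l)), |⟪x, y⟫| ≤ t₂ * ‖x‖ * ‖y‖)
    (δ : EuclideanSpace ℝ (Fin Mdim)) (hδ0 : δ ≠ 0)
    (hδmem : δ ∈ ⨆ k, ⨆ (_ : k ≠ (0 : Fin K)), S k)
    (δC : EuclideanSpace ℝ (Fin Mdim))
    (hδC : δC = ‖δ‖⁻¹ • δ -
      (Submodule.orthogonalProjectionOnto (Submodule.span ℝ (Set.range U)) (‖δ‖⁻¹ • δ) :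
        EuclideanSpace ℝ (Fin Mdim))) :
    h₁ * ‖δ‖ * Real.sqrt (((K : ℝ) - 1) -
        ((K : ℝ) - 2 + ((K : ℝ) - 2) * t₂) * ‖δC‖ ^ 2) ≤
      ∑ j ∈ univ.filter (fun j => label j ≠ (0 : Fin K)), |⟪δ, d j⟫| := by
  have hnn : 0 ≤ ∑ j ∈ univ.filter (fun j => label j ≠ (0 : Fin K)), |⟪δ, d j⟫| :=
    Finset.sum_nonneg fun _ _ => abs_nonneg _
  rcases le_or_gt h₁ 0 with hneg | hpos
  · refine le_trans ?_ hnn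
    rw [mul_assoc]
    exact mul_nonpos_of_nonpos_of_nonneg hneg (by positivity)
  have hn0 : 0 < ‖δ‖ := norm_pos_iff.2 hδ0
  set W := Submodule.span ℝ (Set.range U) with hW
  set V : Fin K → Submodule ℝ (EuclideanSpace ℝ (Fin Mdim)) :=
    fun k => Submodule.span ℝ (Set.range (Uh k)) with hV
  set I : Finset (Fin K) := univ.filter (fun k => k ≠ 0) with hI
  have hSV : ∀ k, S k = W ⊔ V k := fun k => by rw [hS k, Submodule.span_union]
  have hWV : ∀ k, V k ≤ Wᗮ := by
    intro k
    rw [hV, Submodule.span_le]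
    rintro _ ⟨j, rfl⟩
    have : W ≤ (Submodule.span ℝ {Uh k j})ᗮ := by
      rw [hW, Submodule.span_le]
      rintro _ ⟨i, rfl⟩
      rw [SetLike.mem_coe, Submodule.mem_orthogonal_singleton_iff_inner_left]
      exact hperp k j i
    intro u hu
    exact Submodule.mem_orthogonal_singleton_iff_inner_left.1 (this hu)
  have hcard : (I.card : ℝ) = (K : ℝ) - 1 := by
    have : I = univ.erase 0 := by ext; simp [hI]
    rw [this, Finset.card_erase_of_mem (Finset.mem_univ _), Finset.card_univ, Fintype.card_fin,
      Nat.cast_sub (Nat.one_le_iff_ne_zero.2 (NeZero.ne K)), Nat.cast_one]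
  have hK1 : 1 ≤ I.card := by
    rw [Nat.one_le_iff_ne_zero]
    intro hc
    rw [Finset.card_eq_zero] at hc
    apply hδ0
    have : (⨆ k, ⨆ (_ : k ≠ (0 : Fin K)), S k) = ⊥ := by
      simp only [iSup_eq_bot]
      intro k hk
      have : k ∈ I := by simp [hI, hk]
      rw [hc] at this
      simp at this
    rw [this] at hδmem
    simpa using hδmem
  -- decompose
  set e := ‖δ‖⁻¹ • δ with he
  have hen : ‖e‖ = 1 := by
    rw [he, norm_smul, norm_inv, norm_norm, inv_mul_cancel₀ hn0.ne']
  have heδ : δ = ‖δ‖ • e := by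
    rw [he, smul_smul, mul_inv_cancel₀ hn0.ne', one_smul]
  have hle : (⨆ k, ⨆ (_ : k ≠ (0 : Fin K)), S k) ≤ W ⊔ ⨆ k ∈ I, V k := by
    refine iSup_le fun k => iSup_le fun hk => ?_
    rw [hSV k]
    have hkI : k ∈ I := by simp [hI, hk]
    exact sup_le_sup le_rfl (le_iSup₂_of_le k hkI le_rfl)
  have hemem : e ∈ W ⊔ ⨆ k ∈ I, V k := Submodule.smul_mem _ _ (hle hδmem)
  obtain ⟨w, hw, v, hv, hwv⟩ := Submodule.mem_sup.1 hemem
  have hvW : v ∈ Wᗮ := (iSup₂_le fun k _ => hWV k : (⨆ k ∈ I, V k) ≤ Wᗮ) hv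
  have hPw : W.starProjection e = w :=
    Submodule.eq_starProjection_of_mem_of_inner_eq_zero hw (fun u hu => by
      rw [← hwv, add_sub_cancel_left]
      rw [real_inner_comm]
      exact (Submodule.mem_orthogonal _ _).1 hvW u hu)
  have hδCv : δC = v := by
    rw [hδC]
    change e - W.starProjection e = v
    rw [hPw, ← hwv, add_sub_cancel_left]
  have hwvn : ‖w‖ ^ 2 + ‖v‖ ^ 2 = 1 := by
    have := norm_add_sq_real w v
    rw [hwv, hen, (Submodule.mem_orthogonal _ _).1 hvW w hw] at this
    linarith
  -- per-cluster
  set q : Fin K → ℝ := fun k => ‖(V k).starProjection v‖ with hq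
  set y : Fin K → EuclideanSpace ℝ (Fin Mdim) := fun k => w + (V k).starProjection v with hy
  have hqmem : ∀ k, (V k).starProjection v ∈ V k := fun k => Submodule.starProjection_apply_mem _ _
  have hyn : ∀ k, ‖y k‖ ^ 2 = ‖w‖ ^ 2 + q k ^ 2 := by
    intro k
    have := norm_add_sq_real w ((V k).starProjection v)
    rw [(Submodule.mem_orthogonal _ _).1 (hWV k (hqmem k)) w hw] at this
    simp only [hy, hq]
    linarith
  have hymem : ∀ k, y k ∈ S k := fun k => by
    rw [hSV k]
    exact Submodule.add_mem_sup hw (hqmem k)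
  have hyinner : ∀ k, ∀ z ∈ S k, ⟪e, z⟫ = ⟪y k, z⟫ := by
    intro k z hz
    rw [hSV k] at hz
    obtain ⟨a, ha, b, hb, rfl⟩ := Submodule.mem_sup.1 hz
    have h0 := (Submodule.mem_orthogonal _ _).1
      (Submodule.sub_starProjection_mem_orthogonal (K := V k) v) b hb
    have h1 := (Submodule.mem_orthogonal _ _).1 hvW a ha
    have h2 := (Submodule.mem_orthogonal _ _).1 (hWV k (hqmem k)) a ha
    rw [inner_sub_right, real_inner_comm, real_inner_comm _ b] at h0
    rw [real_inner_comm] at h1 h2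
    rw [← hwv]
    simp only [hy, inner_add_left, inner_add_right]
    linarith
  have hclus : ∀ k, h₁ * ‖y k‖ ≤ ∑ j ∈ univ.filter (fun j => label j = k), |⟪e, d j⟫| := by
    intro k
    have hs : ∑ j ∈ univ.filter (fun j => label j = k), |⟪e, d j⟫|
        = ∑ j ∈ univ.filter (fun j => label j = k), |⟪y k, d j⟫| := by
      refine Finset.sum_congr rfl fun j hj => ?_
      have hj' : label j = k := by simpa using hj
      rw [hyinner k (d j) (hj' ▸ hdmem j)]
    rw [hs]
    rcases (norm_nonneg (y k)).eq_or_lt with h0 | h0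
    · rw [← h0, mul_zero]
      exact Finset.sum_nonneg fun _ _ => abs_nonneg _
    · have := hh₁ k (‖y k‖⁻¹ • y k) (Submodule.smul_mem _ _ (hymem k))
        (by rw [norm_smul, norm_inv, norm_norm, inv_mul_cancel₀ h0.ne'])
      simp_rw [real_inner_smul_left, abs_mul, abs_inv, abs_norm] at this
      rw [← Finset.mul_sum, inv_mul_eq_div, le_div_iff₀ h0] at this
      exact this
  have htot : ∑ j ∈ univ.filter (fun j => label j ≠ (0 : Fin K)), |⟪δ, d j⟫|
      = ‖δ‖ * ∑ k ∈ I, ∑ j ∈ univ.filter (fun j => label j = k), |⟪e, d j⟫| := by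
    have h1 : ∑ j ∈ univ.filter (fun j => label j ≠ (0 : Fin K)), |⟪δ, d j⟫|
        = ‖δ‖ * ∑ j ∈ univ.filter (fun j => label j ≠ (0 : Fin K)), |⟪e, d j⟫| := by
      rw [Finset.mul_sum]
      refine Finset.sum_congr rfl fun j _ => ?_
      conv_lhs => rw [heδ]
      rw [real_inner_smul_left, abs_mul, abs_norm]
    rw [h1]
    congr 1
    rw [← Finset.sum_fiberwise_of_maps_to (s := univ.filter (fun j => label j ≠ (0 : Fin K)))
      (t := I) (g := label) (fun j hj => by simpa [hI] using hj)]
    refine Finset.sum_congr rfl fun k hk => ?_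
    have hk0 : k ≠ 0 := by simpa [hI] using hk
    refine Finset.sum_congr ?_ fun _ _ => rfl
    ext j
    simp only [Finset.mem_filter, Finset.mem_univ, true_and]
    constructor
    · exact fun h => h.2
    · exact fun h => ⟨h ▸ hk0, h⟩
  have hmink := aux_mink I (fun k => ‖y k‖) q ‖w‖ (fun k => norm_nonneg _) hyn
  have hproj := aux_proj I V t₂ ht₂0 haff₂ v hv
  have hsqrt : Real.sqrt (((K : ℝ) - 1) -
        ((K : ℝ) - 2 + ((K : ℝ) - 2) * t₂) * ‖δC‖ ^ 2) ≤ ∑ k ∈ I, ‖y k‖ := by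
    apply Real.sqrt_le_iff.2 ⟨Finset.sum_nonneg fun _ _ => norm_nonneg _, ?_⟩
    refine le_trans ?_ hmink
    have hn1 : (1 : ℝ) ≤ I.card := by exact_mod_cast hK1
    have hKn : (K : ℝ) = I.card + 1 := by linarith
    rw [hδCv, hKn]
    have h2 : (I.card : ℝ) * ‖w‖ ^ 2 ≤ (I.card : ℝ) ^ 2 * ‖w‖ ^ 2 :=
      mul_le_mul_of_nonneg_right (by nlinarith) (sq_nonneg _)
    have h3 : ‖w‖ ^ 2 = 1 - ‖v‖ ^ 2 := by linarith
    have h4 : (I.card : ℝ) * ‖w‖ ^ 2 + (1 - ((I.card : ℝ) - 1) * t₂) * ‖v‖ ^ 2 ≤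
        (I.card : ℝ) ^ 2 * ‖w‖ ^ 2 + (∑ k ∈ I, q k) ^ 2 := add_le_add h2 hproj
    refine le_trans (le_of_eq ?_) h4
    rw [h3]
    ring
  rw [htot]
  calc h₁ * ‖δ‖ * _ ≤ h₁ * ‖δ‖ * ∑ k ∈ I, ‖y k‖ :=
        mul_le_mul_of_nonneg_left hsqrt (by positivity)
    _ = ‖δ‖ * ∑ k ∈ I, h₁ * ‖y k‖ := by rw [← Finset.mul_sum]; ring
    _ ≤ _ := mul_le_mul_of_nonneg_left (Finset.sum_le_sum fun k _ => hclus k) hn0.le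
end

section
/- Under the deterministic data model, let δ be any nonzero vector in S_{-1} = ⊕_{k=2}^K S_k, let δ_C denote the component of δ/‖δ‖₂ orthogonal to span(U), and suppose aff_∞(Û₁, Û_{-1}) ≤ t₁, where Û_{-1} is an orthonormal basis matrix of ⊕_{k=2}^K span(Û_k). Then the ℓ₁-norm of the inner products of δ with the columns of D₁ satisfies Σ_{columns d of D₁} |δᵀd| ≤ h₂ · ‖δ‖₂ · √( 1 + (t₁² − 1)·‖δ_C‖₂² ). -/
open scoped RealInnerProductSpace
open Finset

/-- deterministic model, upper bound for in-cluster inner products: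
columns `d j` of `D` are unit vectors in the union of `K` subspaces
`S k = span[U, Û_k]`; the cluster `S₁` is indexed by `0 : Fin K`.  `h₂` is an upper bound
for `‖δᵀD_k‖₁` over unit `δ ∈ S k`, and `aff_∞(Û₁, Û_{−1}) ≤ t₁`, where `Û_{−1}` spans
`⊕_{k≥2} span(Û_k)`.  For any nonzero `δ ∈ S_{−1} = ⊕_{k≥2} S k`, with `δ_C` the
component of `δ/‖δ‖` orthogonal to `span U`,
`∑_{columns of D₁} |δᵀd| ≤ h₂‖δ‖√(1 + (t₁² − 1)‖δ_C‖²)`. -/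
theorem stmt_12 (Mdim N K s : ℕ) [NeZero K] (p : Fin K → ℕ)
    (U : Fin s → EuclideanSpace ℝ (Fin Mdim))
    (Uh : (k : Fin K) → Fin (p k) → EuclideanSpace ℝ (Fin Mdim))
    (hU : Orthonormal ℝ U)
    (hUh : ∀ k, Orthonormal ℝ (Uh k))
    (hperp : ∀ k j i, ⟪U i, Uh k j⟫ = 0)
    (S : Fin K → Submodule ℝ (EuclideanSpace ℝ (Fin Mdim)))
    (hS : ∀ k, S k = Submodule.span ℝ (Set.range U ∪ Set.range (Uh k)))
    (d : Fin N → EuclideanSpace ℝ (Fin Mdim))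
    (label : Fin N → Fin K)
    (hdnorm : ∀ j, ‖d j‖ = 1)
    (hdmem : ∀ j, d j ∈ S (label j))
    (h₂ t₁ : ℝ) (ht₁0 : 0 ≤ t₁)
    (hh₂ : ∀ k, ∀ δ ∈ S k, ‖δ‖ = 1 →
      (∑ j ∈ univ.filter (fun j => label j = k), |⟪δ, d j⟫|) ≤ h₂)
    (haff₁ : ∀ x ∈ Submodule.span ℝ (Set.range (Uh (0 : Fin K))),
      ∀ y ∈ ⨆ k, ⨆ (_ : k ≠ (0 : Fin K)), Submodule.span ℝ (Set.range (Uh k)),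
      |⟪x, y⟫| ≤ t₁ * ‖x‖ * ‖y‖)
    (δ : EuclideanSpace ℝ (Fin Mdim)) (hδ0 : δ ≠ 0)
    (hδmem : δ ∈ ⨆ k, ⨆ (_ : k ≠ (0 : Fin K)), S k)
    (δC : EuclideanSpace ℝ (Fin Mdim))
    (hδC : δC = ‖δ‖⁻¹ • δ -
      (Submodule.orthogonalProjectionOnto (Submodule.span ℝ (Set.range U)) (‖δ‖⁻¹ • δ) :
        EuclideanSpace ℝ (Fin Mdim))) :
    (∑ j ∈ univ.filter (fun j => label j = (0 : Fin K)), |⟪δ, d j⟫|) ≤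
      h₂ * ‖δ‖ * Real.sqrt (1 + (t₁ ^ 2 - 1) * ‖δC‖ ^ 2) := by
  classical
  set W := Submodule.span ℝ (Set.range U) with hW
  set V := ⨆ k, ⨆ (_ : k ≠ (0 : Fin K)), Submodule.span ℝ (Set.range (Uh k)) with hV
  have hS' : ∀ k, S k = W ⊔ Submodule.span ℝ (Set.range (Uh k)) := by
    intro k; rw [hS k, Submodule.span_union]
  have hort : ∀ k, Submodule.span ℝ (Set.range (Uh k)) ≤ Wᗮ := by
    intro k
    rw [Submodule.span_le]
    rintro _ ⟨j, rfl⟩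
    show Uh k j ∈ Wᗮ
    rw [Submodule.mem_orthogonal]
    intro x hx
    induction hx using Submodule.span_induction with
    | mem x hx => obtain ⟨i, rfl⟩ := hx; exact hperp k j i
    | zero => simp
    | add x y _ _ h1 h2 => rw [inner_add_left, h1, h2, add_zero]
    | smul a x _ h => rw [inner_smul_left, h, mul_zero]
  have hVort : V ≤ Wᗮ := iSup_le fun k => iSup_le fun _ => hort k
  have hle : (⨆ k, ⨆ (_ : k ≠ (0 : Fin K)), S k) ≤ W ⊔ V := by
    refine iSup_le fun k => iSup_le fun hk => ?_
    rw [hS' k]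
    refine sup_le_sup_left ?_ W
    exact le_iSup_of_le k (le_iSup_of_le hk le_rfl)
  obtain ⟨u, hu, c, hc, huc⟩ := Submodule.mem_sup.1 (hle hδmem)
  have hcW : c ∈ Wᗮ := hVort hc
  have hproj : ((Submodule.orthogonalProjectionOnto W δ : W) :
      EuclideanSpace ℝ (Fin Mdim)) = u := by
    have := Submodule.eq_starProjection_of_mem_orthogonal' (K := W) (u := δ) (v := u) (z := c)
      hu hcW huc.symm
    simpa using this
  have hn : 0 < ‖δ‖ := norm_pos_iff.2 hδ0
  have hδC' : δC = ‖δ‖⁻¹ • c := by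
    rw [hδC, map_smul, Submodule.coe_smul, hproj, ← smul_sub, ← huc, add_sub_cancel_left]
  have hnC : ‖δ‖ * ‖δC‖ = ‖c‖ := by
    rw [hδC', norm_smul, norm_inv, norm_norm, mul_inv_cancel_left₀ hn.ne']
  have hδsq : ‖δ‖ ^ 2 = ‖u‖ ^ 2 + ‖c‖ ^ 2 := by
    have h0 : ⟪u, c⟫ = 0 := (Submodule.mem_orthogonal _ _).1 hcW u hu
    rw [← huc, norm_add_sq_real, h0]; ring
  -- projection of c on span of Uh 0
  set V0 := Submodule.span ℝ (Set.range (Uh 0)) with hV0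
  set w : EuclideanSpace ℝ (Fin Mdim) := V0.starProjection c with hw
  have hwV : w ∈ V0 := by rw [hw]; exact Submodule.starProjection_apply_mem _ _
  have hcw : c - w ∈ V0ᗮ := by rw [hw]; exact Submodule.sub_starProjection_mem_orthogonal _
  have hwW : w ∈ Wᗮ := hort 0 hwV
  have hwc : ⟪w, c⟫ = ‖w‖ ^ 2 := by
    have h := (Submodule.mem_orthogonal _ _).1 hcw w hwV
    rw [inner_sub_right, real_inner_self_eq_norm_sq] at h
    linarith
  have hwle : ‖w‖ ≤ t₁ * ‖c‖ := by
    have h := (le_abs_self _).trans (haff₁ w hwV c hc)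
    rw [hwc] at h
    rcases (norm_nonneg w).eq_or_lt with h0 | h0
    · rw [← h0]; positivity
    · nlinarith
  have hwsq : ‖w‖ ^ 2 ≤ t₁ ^ 2 * ‖c‖ ^ 2 := by
    rw [← mul_pow]; exact pow_le_pow_left₀ (norm_nonneg _) hwle 2
  have hqsq : ‖u + w‖ ^ 2 = ‖u‖ ^ 2 + ‖w‖ ^ 2 := by
    have h0 : ⟪u, w⟫ = 0 := (Submodule.mem_orthogonal _ _).1 hwW u hu
    rw [norm_add_sq_real, h0]; ring
  have hqS : u + w ∈ S 0 := by
    rw [hS' 0]; exact Submodule.add_mem_sup hu hwV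
  have hinner : ∀ x ∈ S 0, ⟪δ, x⟫ = ⟪u + w, x⟫ := by
    intro x hx
    rw [hS' 0] at hx
    obtain ⟨a, ha, b, hb, rfl⟩ := Submodule.mem_sup.1 hx
    have h1 := (Submodule.mem_orthogonal' _ _).1 (Submodule.sub_mem _ hcW hwW) a ha
    have h2 := (Submodule.mem_orthogonal' _ _).1 hcw b hb
    have h3 : δ = (u + w) + (c - w) := by rw [← huc]; abel
    rw [h3, inner_add_left (u + w), inner_add_right (c - w), h1, h2]; simp
  have hscale : ∀ k, ∀ x ∈ S k,
      (∑ j ∈ univ.filter (fun j => label j = k), |⟪x, d j⟫|) ≤ h₂ * ‖x‖ := by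
    intro k x hx
    by_cases h0 : x = 0
    · simp [h0]
    have hp : 0 < ‖x‖ := norm_pos_iff.2 h0
    have h := hh₂ k (‖x‖⁻¹ • x) (Submodule.smul_mem _ _ hx)
      (by rw [norm_smul, norm_inv, norm_norm, inv_mul_cancel₀ hp.ne'])
    simp only [real_inner_smul_left, abs_mul, abs_inv, abs_norm] at h
    rw [← Finset.mul_sum, inv_mul_le_iff₀ hp] at h
    linarith
  have hh0 : 0 ≤ h₂ := by
    by_contra hneg
    have hbot : ∀ k, S k = ⊥ := by
      intro k
      rw [Submodule.eq_bot_iff]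
      intro x hx
      by_contra hx0
      have h1 := hscale k x hx
      have h2 : 0 ≤ ∑ j ∈ univ.filter (fun j => label j = k), |⟪x, d j⟫| :=
        Finset.sum_nonneg fun _ _ => abs_nonneg _
      have h3 : 0 < ‖x‖ := norm_pos_iff.2 hx0
      nlinarith
    apply hδ0
    simpa [hbot] using hδmem
  have hfin : ‖u + w‖ ≤ ‖δ‖ * Real.sqrt (1 + (t₁ ^ 2 - 1) * ‖δC‖ ^ 2) := by
    have hkey : ‖u + w‖ ^ 2 ≤ ‖δ‖ ^ 2 * (1 + (t₁ ^ 2 - 1) * ‖δC‖ ^ 2) := by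
      have : ‖δ‖ ^ 2 * (1 + (t₁ ^ 2 - 1) * ‖δC‖ ^ 2)
          = ‖δ‖ ^ 2 + (t₁ ^ 2 - 1) * (‖δ‖ * ‖δC‖) ^ 2 := by ring
      rw [this, hnC, hqsq, hδsq]; linarith
    have h := Real.sqrt_le_sqrt hkey
    rwa [Real.sqrt_sq (norm_nonneg _), Real.sqrt_mul (sq_nonneg _),
      Real.sqrt_sq (norm_nonneg _)] at h
  calc (∑ j ∈ univ.filter (fun j => label j = (0 : Fin K)), |⟪δ, d j⟫|)
      = ∑ j ∈ univ.filter (fun j => label j = (0 : Fin K)), |⟪u + w, d j⟫| := by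
        refine Finset.sum_congr rfl fun j hj => ?_
        rw [hinner (d j) ((Finset.mem_filter.1 hj).2 ▸ hdmem j)]
    _ ≤ h₂ * ‖u + w‖ := hscale 0 _ hqS
    _ ≤ h₂ * (‖δ‖ * Real.sqrt (1 + (t₁ ^ 2 - 1) * ‖δC‖ ^ 2)) :=
        mul_le_mul_of_nonneg_left hfin hh0
    _ = _ := by ring
end

section
/- Let z₁,…,z_m be i.i.d. standard Gaussian random variables, let 1 ≤ s < m be integers, and let ζ > 1 be a constant. Then P[ (Σ_{i=1}^s z_i² / s) / (Σ_{i=s+1}^m z_i² / (m−s)) > ζ ] ≤ 2e^{−ε²}, where ε = [ −(√s + ζs/√(m−s)) + √( (√s + ζs/√(m−s))² + 2s(ζ−1) ) ] / 2. -/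
open MeasureTheory ProbabilityTheory Finset

lemma aux_mgf_sq {Ω : Type*} [MeasurableSpace Ω] (μ : Measure Ω)
    (X : Ω → ℝ) (hX : Measure.map X μ = gaussianReal 0 1) (t : ℝ) (ht : 0 < 1 - 2 * t) :
    mgf (fun ω => X ω ^ 2) μ t = Real.exp (-(1 / 2) * Real.log (1 - 2 * t)) := by
  have hm : AEMeasurable X μ := aemeasurable_of_map_neZero (by rw [hX]; infer_instance)
  have h1 : mgf (fun ω => X ω ^ 2) μ t = ∫ x, Real.exp (t * x ^ 2) ∂(gaussianReal 0 1) := by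
    rw [← hX, integral_map hm (by fun_prop)]
    rfl
  rw [h1, integral_gaussianReal_eq_integral_smul one_ne_zero]
  have h2 : ∀ x : ℝ, gaussianPDFReal 0 1 x • Real.exp (t * x ^ 2)
      = (Real.sqrt (2 * Real.pi))⁻¹ * Real.exp (-((1 - 2 * t) / 2) * x ^ 2) := by
    intro x
    simp only [gaussianPDFReal, smul_eq_mul, NNReal.coe_one, mul_one, sub_zero]
    rw [mul_assoc, ← Real.exp_add]
    congr 2
    ring
  simp_rw [h2]
  rw [integral_const_mul, integral_gaussian, ← Real.sqrt_inv, ← Real.sqrt_mul (by positivity)]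
  have h3 : (2 * Real.pi)⁻¹ * (Real.pi / ((1 - 2 * t) / 2)) = Real.exp (-Real.log (1 - 2 * t)) := by
    rw [Real.exp_neg, Real.exp_log ht]
    have := Real.pi_pos
    field_simp
  rw [h3, ← Real.exp_half]
  congr 1
  ring

lemma aux_mgf_sum {Ω : Type*} [MeasurableSpace Ω] (μ : Measure Ω) [IsProbabilityMeasure μ]
    {ι : Type*} (z : ι → Ω → ℝ) (hindep : iIndepFun z μ)
    (hdist : ∀ i, Measure.map (z i) μ = gaussianReal 0 1) (S : Finset ι) (t : ℝ)
    (ht : 0 < 1 - 2 * t) :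
    mgf (fun ω => ∑ i ∈ S, z i ω ^ 2) μ t
      = Real.exp (-(#S / 2) * Real.log (1 - 2 * t)) := by
  have hm : ∀ i, AEMeasurable (z i) μ := fun i =>
    aemeasurable_of_map_neZero (by rw [hdist i]; infer_instance)
  have hi : iIndepFun (fun i ω => z i ω ^ 2) μ :=
    hindep.comp (fun _ x => x ^ 2) (fun _ => by fun_prop)
  have h := hi.mgf_sum₀ (t := t) (fun i => (hm i).pow_const 2) S
  have e : (∑ i ∈ S, fun ω => z i ω ^ 2) = fun ω => ∑ i ∈ S, z i ω ^ 2 := by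
    ext ω; simp
  rw [e] at h
  rw [h, Finset.prod_congr rfl (fun i _ => aux_mgf_sq μ (z i) (hdist i) t ht),
    Finset.prod_const, ← Real.exp_nat_mul]
  congr 1
  ring

lemma aux_upper {Ω : Type*} [MeasurableSpace Ω] (μ : Measure Ω) [IsProbabilityMeasure μ]
    {ι : Type*} (z : ι → Ω → ℝ) (hindep : iIndepFun z μ)
    (hdist : ∀ i, Measure.map (z i) μ = gaussianReal 0 1) (S : Finset ι) (r x : ℝ)
    (hr : 0 < r) (hS : (#S : ℝ) = r ^ 2) (hx : 0 ≤ x) :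
    μ.real {ω | r ^ 2 + 2 * r * x + 2 * x ^ 2 ≤ ∑ i ∈ S, z i ω ^ 2} ≤ Real.exp (-x ^ 2) := by
  obtain ⟨w, hw⟩ : ∃ w, w = 1 + 2 * x / r := ⟨_, rfl⟩
  have hw1 : 1 ≤ w := by rw [hw]; have : 0 ≤ 2 * x / r := by positivity
                         linarith
  have hw0 : 0 < w := by linarith
  have hwi : w⁻¹ ≤ 1 := inv_le_one_of_one_le₀ hw1
  have hb : 1 - 2 * ((1 - w⁻¹) / 2) = w⁻¹ := by ring
  have hb0 : 0 < 1 - 2 * ((1 - w⁻¹) / 2) := by rw [hb]; positivity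
  have hmgf := aux_mgf_sum μ z hindep hdist S ((1 - w⁻¹) / 2) hb0
  have h := measure_ge_le_exp_mul_mgf (μ := μ) (X := fun ω => ∑ i ∈ S, z i ω ^ 2)
    (t := (1 - w⁻¹) / 2) (r ^ 2 + 2 * r * x + 2 * x ^ 2) (by linarith)
    (mgf_pos_iff.1 (by rw [hmgf]; positivity))
  refine h.trans ?_
  rw [hmgf, ← Real.exp_add, hb, Real.log_inv, hS]
  apply Real.exp_le_exp.2
  have hl : Real.log w ≤ (w - w⁻¹) / 2 := by
    rw [← Real.sinh_log hw0]
    exact Real.self_le_sinh_iff.2 (Real.log_nonneg hw1)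
  have hl2 := mul_le_mul_of_nonneg_left hl (show 0 ≤ r ^ 2 / 2 by positivity)
  have hxw : x = r * (w - 1) / 2 := by rw [hw]; field_simp; ring
  have key : -((1 - w⁻¹) / 2) * (r ^ 2 + 2 * r * x + 2 * x ^ 2) + r ^ 2 / 2 * ((w - w⁻¹) / 2)
      = -x ^ 2 := by
    rw [hxw]; field_simp; ring
  linarith

lemma aux_lower {Ω : Type*} [MeasurableSpace Ω] (μ : Measure Ω) [IsProbabilityMeasure μ]
    {ι : Type*} (z : ι → Ω → ℝ) (hindep : iIndepFun z μ)
    (hdist : ∀ i, Measure.map (z i) μ = gaussianReal 0 1) (S : Finset ι) (r x : ℝ)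
    (hr : 0 < r) (hS : (#S : ℝ) = r ^ 2) (hx : 0 ≤ x) :
    μ.real {ω | ∑ i ∈ S, z i ω ^ 2 ≤ r ^ 2 - 2 * r * x} ≤ Real.exp (-x ^ 2) := by
  obtain ⟨u, hu⟩ : ∃ u, u = 2 * x / r := ⟨_, rfl⟩
  have hu0 : 0 ≤ u := by rw [hu]; positivity
  have hb : 1 - 2 * (-u / 2) = 1 + u := by ring
  have hb0 : 0 < 1 - 2 * (-u / 2) := by rw [hb]; positivity
  have hmgf := aux_mgf_sum μ z hindep hdist S (-u / 2) hb0
  have h := measure_le_le_exp_mul_mgf (μ := μ) (X := fun ω => ∑ i ∈ S, z i ω ^ 2)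
    (t := -u / 2) (r ^ 2 - 2 * r * x) (by linarith)
    (mgf_pos_iff.1 (by rw [hmgf]; positivity))
  refine h.trans ?_
  rw [hmgf, ← Real.exp_add, hb, hS]
  apply Real.exp_le_exp.2
  have hl : u - u ^ 2 / 2 ≤ Real.log (1 + u) := by
    refine le_trans ?_ (Real.le_log_one_add_of_nonneg hu0)
    rw [le_div_iff₀ (by positivity)]
    have : 0 ≤ u ^ 3 := by positivity
    nlinarith
  have hl2 := mul_le_mul_of_nonneg_left hl (show 0 ≤ r ^ 2 / 2 by positivity)
  have hxu : x = r * u / 2 := by rw [hu]; field_simp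
  have key : -(-u / 2) * (r ^ 2 - 2 * r * x) - r ^ 2 / 2 * (u - u ^ 2 / 2) = -x ^ 2 := by
    rw [hxu]; ring
  linarith

/-- Let `z₁,…,z_m` be i.i.d. standard Gaussian random variables, `1 ≤ s < m`
and `ζ > 1`.  Then
`P[(∑_{i≤s} z_i²/s)/(∑_{i>s} z_i²/(m−s)) > ζ] ≤ 2e^{−ε²}`, where
`ε = [−(√s + ζs/√(m−s)) + √((√s + ζs/√(m−s))² + 2s(ζ−1))]/2`. -/
theorem stmt_13 {Ω : Type*} [MeasurableSpace Ω] (μ : Measure Ω) [IsProbabilityMeasure μ]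
    (m s : ℕ) (hs : 1 ≤ s) (hsm : s < m)
    (z : Fin m → Ω → ℝ)
    (hindep : iIndepFun z μ)
    (hdist : ∀ i, Measure.map (z i) μ = gaussianReal 0 1)
    (ζ : ℝ) (hζ : 1 < ζ)
    (ε : ℝ)
    (hε : ε = (-(Real.sqrt s + ζ * s / Real.sqrt ((m : ℝ) - s)) +
      Real.sqrt ((Real.sqrt s + ζ * s / Real.sqrt ((m : ℝ) - s)) ^ 2 +
        2 * s * (ζ - 1))) / 2) :
    μ {ω | ζ < ((∑ i ∈ univ.filter (fun i : Fin m => (i : ℕ) < s), z i ω ^ 2) / s) /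
        ((∑ i ∈ univ.filter (fun i : Fin m => s ≤ (i : ℕ)), z i ω ^ 2) / ((m : ℝ) - s))} ≤
      ENNReal.ofReal (2 * Real.exp (-ε ^ 2)) := by
  have hs0 : (0 : ℝ) < s := by exact_mod_cast hs
  have hn0 : (0 : ℝ) < (m : ℝ) - s := by
    have : (s : ℝ) < m := by exact_mod_cast hsm
    linarith
  obtain ⟨r, hr⟩ : ∃ r, r = Real.sqrt s := ⟨_, rfl⟩
  obtain ⟨q, hq⟩ : ∃ q, q = Real.sqrt ((m : ℝ) - s) := ⟨_, rfl⟩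
  have hr0 : 0 < r := by rw [hr]; exact Real.sqrt_pos.2 hs0
  have hq0 : 0 < q := by rw [hq]; exact Real.sqrt_pos.2 hn0
  have hr2 : (s : ℝ) = r ^ 2 := by rw [hr, Real.sq_sqrt hs0.le]
  have hq2 : (m : ℝ) - s = q ^ 2 := by rw [hq, Real.sq_sqrt hn0.le]
  have hc1 : #(univ.filter (fun i : Fin m => (i : ℕ) < s)) = s := by
    rw [Fin.card_filter_val_lt]; omega
  have hc2 : #(univ.filter (fun i : Fin m => s ≤ (i : ℕ))) = m - s := by
    have h := Finset.card_filter_add_card_filter_not (s := (univ : Finset (Fin m)))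
      (fun i : Fin m => (i : ℕ) < s)
    simp only [not_lt, Finset.card_univ, Fintype.card_fin] at h
    omega
  rw [← hr, ← hq] at hε
  obtain ⟨A, hA⟩ : ∃ A, A = r + ζ * s / q := ⟨_, rfl⟩
  rw [← hA] at hε
  have hA0 : 0 < A := by rw [hA]; positivity
  have hz : 0 ≤ 2 * (s : ℝ) * (ζ - 1) := mul_nonneg (by positivity) (by linarith)
  have hsq : Real.sqrt (A ^ 2 + 2 * s * (ζ - 1)) ^ 2 = A ^ 2 + 2 * s * (ζ - 1) :=
    Real.sq_sqrt (by positivity)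
  have hε0 : 0 ≤ ε := by
    have : A ≤ Real.sqrt (A ^ 2 + 2 * s * (ζ - 1)) := Real.le_sqrt_of_sq_le (by linarith)
    rw [hε]; linarith
  have hroot : Real.sqrt (A ^ 2 + 2 * s * (ζ - 1)) = 2 * ε + A := by rw [hε]; ring
  rw [hroot] at hsq
  have hquad : 2 * ε ^ 2 + 2 * ε * A = s * (ζ - 1) := by linarith
  have hup := aux_upper μ z hindep hdist (univ.filter (fun i : Fin m => (i : ℕ) < s)) r ε hr0
    (by rw [hc1, hr2]) hε0
  have hlo := aux_lower μ z hindep hdist (univ.filter (fun i : Fin m => s ≤ (i : ℕ))) q ε hq0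
    (by rw [hc2, Nat.cast_sub hsm.le, hq2]) hε0
  have heq : r ^ 2 + 2 * r * ε + 2 * ε ^ 2 = ζ * r ^ 2 * (q ^ 2 - 2 * q * ε) / q ^ 2 := by
    have : 2 * ε * (r + ζ * r ^ 2 / q) + 2 * ε ^ 2 = r ^ 2 * (ζ - 1) := by
      rw [← hr2, ← hA]; linarith
    have e2 : ζ * r ^ 2 * (q ^ 2 - 2 * q * ε) / q ^ 2 = ζ * r ^ 2 - 2 * ε * (ζ * r ^ 2 / q) := by
      field_simp
    rw [e2]; linarith
  refine (measure_mono (t :=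
    {ω | r ^ 2 + 2 * r * ε + 2 * ε ^ 2 ≤ ∑ i ∈ univ.filter (fun i : Fin m => (i : ℕ) < s), z i ω ^ 2}
    ∪ {ω | ∑ i ∈ univ.filter (fun i : Fin m => s ≤ (i : ℕ)), z i ω ^ 2 ≤ q ^ 2 - 2 * q * ε})
    ?_).trans ((measure_union_le _ _).trans ?_)
  · intro ω hω
    by_contra hcon
    simp only [Set.mem_union, Set.mem_ofPred_eq, not_or, not_le] at hω hcon
    obtain ⟨h1, h2⟩ := hcon
    rw [hq2, hr2] at hω
    have hX0 : 0 ≤ ∑ i ∈ univ.filter (fun i : Fin m => (i : ℕ) < s), z i ω ^ 2 :=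
      Finset.sum_nonneg fun i _ => sq_nonneg _
    generalize (∑ i ∈ univ.filter (fun i : Fin m => (i : ℕ) < s), z i ω ^ 2) = X at *
    generalize (∑ i ∈ univ.filter (fun i : Fin m => s ≤ (i : ℕ)), z i ω ^ 2) = Y at *
    have hp : 0 < ζ * r ^ 2 * (q ^ 2 - 2 * q * ε) / q ^ 2 := by rw [← heq]; positivity
    have hzr : 0 < ζ * r ^ 2 := by positivity
    have hd0 : 0 < q ^ 2 - 2 * q * ε := by
      by_contra hneg
      have : ζ * r ^ 2 * (q ^ 2 - 2 * q * ε) / q ^ 2 ≤ 0 :=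
        div_nonpos_of_nonpos_of_nonneg
          (mul_nonpos_of_nonneg_of_nonpos hzr.le (not_lt.1 hneg)) (by positivity)
      linarith
    have hY : 0 < Y := hd0.trans h2
    rw [lt_div_iff₀ (by positivity), lt_div_iff₀ (by positivity)] at hω
    rw [heq, lt_div_iff₀ (by positivity)] at h1
    have e3 : ζ * (Y / q ^ 2) * r ^ 2 * q ^ 2 = ζ * r ^ 2 * Y := by field_simp
    have h3 := mul_lt_mul_of_pos_right hω (show 0 < q ^ 2 by positivity)
    have h4 := mul_lt_mul_of_pos_left h2 hzr
    linarith
  · rw [two_mul (Real.exp (-ε ^ 2)), ENNReal.ofReal_add (by positivity) (by positivity)]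
    refine add_le_add ?_ ?_
    · rw [← ofReal_measureReal]; exact ENNReal.ofReal_le_ofReal hup
    · rw [← ofReal_measureReal]; exact ENNReal.ofReal_le_ofReal hlo
end

section
/- Let q̂ be a random vector uniformly distributed on the unit sphere S^{m−1} of ℝ^m, let 1 ≤ s < m and K ≥ 2 be integers, and let t₂, t₃ ∈ [0,1) be constants with (K−1)t₂² < t₃² and ζ := (m−s)[t₃² − (K−1)t₂²] / (s(1 − t₃²)) > 1. Then P[ Σ_{i=1}^s q̂_i² + (K−1)t₂² Σ_{i=s+1}^m q̂_i² > t₃² ] ≤ 2e^{−ε²}, where ε = [ −(√s + ζs/√(m−s)) + √( (√s + ζs/√(m−s))² + 2s(ζ−1) ) ] / 2. -/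
open MeasureTheory Finset

open ProbabilityTheory in
lemma aux_mgf (a : ℝ) (ha : a < 1 / 2) :
    Integrable (fun x : ℝ => Real.exp (a * x ^ 2)) (gaussianReal 0 1) ∧
    ∫ x, Real.exp (a * x ^ 2) ∂(gaussianReal 0 1) = (Real.sqrt (1 - 2 * a))⁻¹ := by
  have key : ∀ x : ℝ, gaussianPDFReal 0 1 x • Real.exp (a * x ^ 2) =
      (Real.sqrt (2 * Real.pi))⁻¹ * Real.exp (-(1 / 2 - a) * x ^ 2) := by
    intro x
    simp only [gaussianPDFReal_def, smul_eq_mul, NNReal.coe_one, mul_one, sub_zero]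
    rw [mul_assoc, ← Real.exp_add]
    congr 2
    ring
  constructor
  · rw [gaussianReal_of_var_ne_zero _ one_ne_zero, gaussianPDF_def,
      integrable_withDensity_iff_integrable_smul' (by fun_prop) (by simp)]
    have : (fun x : ℝ => (ENNReal.ofReal (gaussianPDFReal 0 1 x)).toReal • Real.exp (a * x ^ 2)) =
        fun x => (Real.sqrt (2 * Real.pi))⁻¹ * Real.exp (-(1 / 2 - a) * x ^ 2) := by
      funext x
      rw [ENNReal.toReal_ofReal (gaussianPDFReal_nonneg _ _ _), key]
    rw [this]
    exact (integrable_exp_neg_mul_sq (by linarith)).const_mul _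
  · rw [integral_gaussianReal_eq_integral_smul one_ne_zero]
    simp_rw [key]
    rw [integral_const_mul, integral_gaussian, ← Real.sqrt_inv, ← Real.sqrt_inv,
      ← Real.sqrt_mul (by positivity)]
    congr 1
    have h1 : (1 / 2 - a) ≠ 0 := by linarith
    have h2 : (1 - 2 * a) ≠ 0 := by linarith
    have := Real.pi_ne_zero
    field_simp
    

open ProbabilityTheory in
lemma aux_chernoff {m : ℕ} (a b : Fin m → ℝ) (ha : ∀ i, a i < 1 / 2)
    (hb : ∀ i, (Real.sqrt (1 - 2 * a i))⁻¹ ≤ Real.exp (b i)) :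
    (Measure.pi (fun _ : Fin m => gaussianReal 0 1)) {x | 0 < ∑ i, a i * x i ^ 2} ≤
      ENNReal.ofReal (Real.exp (∑ i, b i)) := by
  set P := Measure.pi (fun _ : Fin m => gaussianReal 0 1)
  have hint : Integrable (fun x : Fin m → ℝ => ∏ i, Real.exp (a i * x i ^ 2)) P :=
    Integrable.fintype_prod (f := fun i (x : ℝ) => Real.exp (a i * x ^ 2))
      (fun i => (aux_mgf (a i) (ha i)).1)
  have hval : ∫ x, ∏ i, Real.exp (a i * x i ^ 2) ∂P = ∏ i, (Real.sqrt (1 - 2 * a i))⁻¹ := by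
    rw [integral_fintype_prod_eq_prod (f := fun i (x : ℝ) => Real.exp (a i * x ^ 2))]
    exact Finset.prod_congr rfl (fun i _ => (aux_mgf (a i) (ha i)).2)
  have hm := mul_meas_ge_le_integral_of_nonneg (μ := P)
    (Filter.Eventually.of_forall (fun x => Finset.prod_nonneg (fun i _ => (Real.exp_pos _).le))) hint 1
  rw [hval, one_mul] at hm
  have h2 : P.real {x | 0 < ∑ i, a i * x i ^ 2} ≤ Real.exp (∑ i, b i) := by
    calc _ ≤ P.real {x | 1 ≤ ∏ i, Real.exp (a i * x i ^ 2)} := by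
          refine measureReal_mono ?_ (measure_ne_top _ _)
          intro x hx
          simp only [Set.mem_ofPred_eq] at hx ⊢
          rw [← Real.exp_sum]
          exact Real.one_le_exp hx.le
      _ ≤ _ := hm
      _ ≤ _ := by
          rw [Real.exp_sum]
          exact Finset.prod_le_prod (fun i _ => by positivity) (fun i _ => hb i)
  rw [← ofReal_measureReal]
  exact ENNReal.ofReal_le_ofReal h2

lemma aux_up (l : ℝ) (h0 : 0 ≤ l) (h1 : l < 1 / 2) :
    (Real.sqrt (1 - 2 * l))⁻¹ ≤ Real.exp (l + l ^ 2 / (1 - 2 * l)) := by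
  have hp : 0 < 1 - 2 * l := by linarith
  have hs : 0 < (Real.sqrt (1 - 2 * l))⁻¹ := by positivity
  rw [← Real.log_le_iff_le_exp hs, Real.log_inv, Real.log_sqrt hp.le]
  have hl : Real.log (1 - 2 * l) ≤ 0 := Real.log_nonpos hp.le (by linarith)
  have := Real.self_le_sinh_iff.2 (neg_nonneg.2 hl)
  rw [Real.sinh_eq, neg_neg, Real.exp_neg, Real.exp_log hp] at this
  have e : l + l ^ 2 / (1 - 2 * l) = (((1 - 2 * l)⁻¹ - (1 - 2 * l)) / 2) / 2 := by
    obtain ⟨p, hpl⟩ : ∃ p, p = 1 - 2 * l := ⟨_, rfl⟩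
    have hl' : l = (1 - p) / 2 := by linarith
    rw [← hpl] at hp ⊢
    rw [hl']
    field_simp
    ring
  rw [e]
  linarith

lemma aux_down (w : ℝ) (h0 : 0 ≤ w) :
    (Real.sqrt (1 - 2 * (-w)))⁻¹ ≤ Real.exp (-w + w ^ 2) := by
  have hp : 0 < 1 - 2 * (-w) := by linarith
  have hs : 0 < (Real.sqrt (1 - 2 * (-w)))⁻¹ := by positivity
  rw [← Real.log_le_iff_le_exp hs, Real.log_inv, Real.log_sqrt hp.le]
  have h := Real.le_log_one_add_of_nonneg (x := 2 * w) (by linarith)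
  have e : 1 - 2 * (-w) = 1 + 2 * w := by ring
  rw [e]
  have h3 : 2 * w - 2 * w ^ 2 ≤ 2 * (2 * w) / (2 * w + 2) := by
    rw [le_div_iff₀ (by linarith)]
    nlinarith [pow_nonneg h0 3]
  linarith

lemma aux_rot {m : ℕ} (ν : Measure (EuclideanSpace ℝ (Fin m)))
    (h : ∀ O : EuclideanSpace ℝ (Fin m) ≃ₗᵢ[ℝ] EuclideanSpace ℝ (Fin m), Measure.map O ν = ν)
    (t u : EuclideanSpace ℝ (Fin m)) (htu : ‖t‖ = ‖u‖) : charFun ν t = charFun ν u := by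
  let O := Submodule.reflection (Submodule.span ℝ {t - u})ᗮ
  have hO : O t = u := Submodule.reflection_sub htu
  conv_rhs => rw [← h O, ← hO]
  rw [charFun_apply, charFun_apply, integral_map O.continuous.aemeasurable
    (Continuous.aestronglyMeasurable (by fun_prop))]
  simp only [LinearIsometryEquiv.inner_map_map]

lemma aux_unique {m : ℕ} (ν μ : Measure (EuclideanSpace ℝ (Fin m)))
    (hν : IsUniformOnSphere ν) (hμ : IsUniformOnSphere μ) : ν = μ := by
  obtain ⟨hν1, hν2, hν3⟩ := hν
  obtain ⟨hμ1, hμ2, hμ3⟩ := hμ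
  apply Measure.ext_of_charFun
  funext t
  have step : ∀ ν μ : Measure (EuclideanSpace ℝ (Fin m)), IsProbabilityMeasure μ →
      μ {x | ‖x‖ = 1}ᶜ = 0 →
      (∀ O : EuclideanSpace ℝ (Fin m) ≃ₗᵢ[ℝ] EuclideanSpace ℝ (Fin m), Measure.map O ν = ν) →
      charFun ν t = ∫ y, charFun ν (‖t‖ • y) ∂μ := by
    intro ν μ _ h2 h3
    have : ∀ᵐ y ∂μ, charFun ν (‖t‖ • y) = charFun ν t := by
      have h2' : ∀ᵐ y ∂μ, ‖y‖ = 1 := h2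
      filter_upwards [h2'] with y hy
      apply aux_rot ν h3
      rw [norm_smul, hy]; simp
    rw [integral_congr_ae this]
    simp
  rw [step ν μ hμ1 hμ2 hν3, step μ ν hν1 hν2 hμ3]
  simp only [charFun_apply]
  rw [integral_integral_swap]
  · congr 1; funext x; congr 1; funext y
    rw [inner_smul_right, inner_smul_right, real_inner_comm]
  · apply Integrable.of_bound (C := 1) (Continuous.aestronglyMeasurable (by fun_prop))
    filter_upwards with p
    simp only [Function.uncurry]
    rw [Complex.norm_exp_ofReal_mul_I]

open ProbabilityTheory in
lemma aux_gauss {m : ℕ} (hm : 0 < m) :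
    IsUniformOnSphere ((stdGaussian (EuclideanSpace ℝ (Fin m))).map (fun x => ‖x‖⁻¹ • x)) := by
  have hmeas : Measurable (fun x : EuclideanSpace ℝ (Fin m) => ‖x‖⁻¹ • x) := by fun_prop
  refine ⟨Measure.isProbabilityMeasure_map hmeas.aemeasurable, ?_, ?_⟩
  · rw [Measure.map_apply hmeas (measurableSet_eq_fun (by fun_prop) (by fun_prop)).compl]
    refine measure_mono_null (t := {0}) ?_ ?_
    · intro x hx
      by_contra h0
      apply hx
      simp only [Set.mem_ofPred_eq, norm_smul, norm_inv, norm_norm]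
      exact inv_mul_cancel₀ (norm_ne_zero_iff.2 h0)
    · rw [← map_pi_eq_stdGaussian, Measure.map_apply (by fun_prop) (measurableSet_singleton _)]
      have : WithLp.toLp 2 ⁻¹' {(0 : EuclideanSpace ℝ (Fin m))} = Set.univ.pi (fun _ => {(0:ℝ)}) := by
        ext x
        simp [Set.mem_pi, funext_iff]
      rw [this, Measure.pi_pi]
      have : NullSingletonClass (gaussianReal 0 1) := nullSingletonClass_gaussianReal one_ne_zero
      have h0 : gaussianReal 0 1 {0} = 0 := measure_singleton 0
      simp [hm.ne', h0]
  · intro O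
    rw [Measure.map_map (by fun_prop) hmeas]
    conv_rhs => rw [← stdGaussian_map O]
    rw [Measure.map_map hmeas (by fun_prop)]
    congr 1
    funext x
    simp

/-- Let `q̂` be uniform on `S^{m−1}`, `1 ≤ s < m`, `K ≥ 2`, and
`t₂, t₃ ∈ [0,1)` with `(K−1)t₂² < t₃²` and
`ζ := (m−s)[t₃² − (K−1)t₂²]/(s(1 − t₃²)) > 1`.  Then
`P[∑_{i≤s} q̂_i² + (K−1)t₂² ∑_{i>s} q̂_i² > t₃²] ≤ 2e^{−ε²}`, where
`ε = [−(√s + ζs/√(m−s)) + √((√s + ζs/√(m−s))² + 2s(ζ−1))]/2`. -/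
theorem stmt_14 (m s K : ℕ) (hs : 1 ≤ s) (hsm : s < m) (hK : 2 ≤ K)
    (ν : Measure (EuclideanSpace ℝ (Fin m))) (hν : IsUniformOnSphere ν)
    (t₂ t₃ : ℝ) (ht₂0 : 0 ≤ t₂) (ht₂1 : t₂ < 1) (ht₃0 : 0 ≤ t₃) (ht₃1 : t₃ < 1)
    (ht : ((K : ℝ) - 1) * t₂ ^ 2 < t₃ ^ 2)
    (ζ : ℝ)
    (hζdef : ζ = ((m : ℝ) - s) * (t₃ ^ 2 - ((K : ℝ) - 1) * t₂ ^ 2) /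
      (s * (1 - t₃ ^ 2)))
    (hζ : 1 < ζ)
    (ε : ℝ)
    (hε : ε = (-(Real.sqrt s + ζ * s / Real.sqrt ((m : ℝ) - s)) +
      Real.sqrt ((Real.sqrt s + ζ * s / Real.sqrt ((m : ℝ) - s)) ^ 2 +
        2 * s * (ζ - 1))) / 2) :
    ν {q | t₃ ^ 2 < (∑ i ∈ univ.filter (fun i : Fin m => (i : ℕ) < s), q i ^ 2) +
        ((K : ℝ) - 1) * t₂ ^ 2 *
          ∑ i ∈ univ.filter (fun i : Fin m => s ≤ (i : ℕ)), q i ^ 2} ≤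
      ENNReal.ofReal (2 * Real.exp (-ε ^ 2)) := by
  have hs0 : (0 : ℝ) < s := by exact_mod_cast hs
  have hn0 : (0 : ℝ) < (m : ℝ) - s := by
    have : (s : ℝ) < m := by exact_mod_cast hsm
    linarith
  have ht3 : 0 < 1 - t₃ ^ 2 := by nlinarith
  set c : ℝ := ((K : ℝ) - 1) * t₂ ^ 2 with hc
  set n : ℝ := (m : ℝ) - s with hn
  set W : ℝ := Real.sqrt s + ζ * s / Real.sqrt n with hW
  have hsq : 0 < Real.sqrt s := Real.sqrt_pos.2 hs0
  have hnq : 0 < Real.sqrt n := Real.sqrt_pos.2 hn0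
  have hζ0 : 0 < ζ := by linarith
  have hW0 : 0 < W := by positivity
  have hD : 0 < 2 * (s : ℝ) * (ζ - 1) := by
    have : 0 < ζ - 1 := by linarith
    positivity
  have hroot := Real.sq_sqrt (show 0 ≤ W ^ 2 + 2 * s * (ζ - 1) by positivity)
  have hquad : 2 * ε ^ 2 + 2 * W * ε = s * (ζ - 1) := by
    have : Real.sqrt (W ^ 2 + 2 * s * (ζ - 1)) = 2 * ε + W := by rw [hε]; ring
    rw [this] at hroot
    linarith
  have hε0 : 0 < ε := by
    have : W < Real.sqrt (W ^ 2 + 2 * s * (ζ - 1)) := by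
      apply Real.lt_sqrt_of_sq_lt; linarith
    rw [hε]; linarith
  -- parameters
  set z : ℝ := ζ * s / n with hz
  have hz0 : 0 < z := by positivity
  set l : ℝ := ε / (W + 2 * ε) with hl
  have hl0 : 0 < l := by positivity
  have hl2 : 1 - 2 * l = W / (W + 2 * ε) := by
    rw [hl]; field_simp; ring
  have hlp : 0 < 1 - 2 * l := by rw [hl2]; positivity
  let a : Fin m → ℝ := fun i => if (i : ℕ) < s then l else -(l * z)
  let b : Fin m → ℝ := fun i => if (i : ℕ) < s then l + l ^ 2 / (1 - 2 * l)
    else -(l * z) + (l * z) ^ 2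
  have ha : ∀ i, a i < 1 / 2 := by
    intro i
    simp only [a]
    split_ifs
    · linarith
    · have : 0 < l * z := by positivity
      linarith
  have hb : ∀ i, (Real.sqrt (1 - 2 * a i))⁻¹ ≤ Real.exp (b i) := by
    intro i
    simp only [a, b]
    split_ifs
    · exact aux_up l hl0.le (by linarith)
    · exact aux_down (l * z) (by positivity)
  have hasum : ∀ x : Fin m → ℝ, ∑ i, a i * x i ^ 2 =
      l * (∑ i ∈ univ.filter (fun i : Fin m => (i : ℕ) < s), x i ^ 2) -
      l * z * ∑ i ∈ univ.filter (fun i : Fin m => s ≤ (i : ℕ)), x i ^ 2 := by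
    intro x
    rw [← Finset.sum_filter_add_sum_filter_not univ (fun i : Fin m => (i : ℕ) < s)]
    simp only [not_lt]
    rw [Finset.mul_sum, Finset.mul_sum, sub_eq_add_neg, ← Finset.sum_neg_distrib]
    congr 1
    · apply Finset.sum_congr rfl
      intro i hi
      simp only [Finset.mem_filter, Finset.mem_univ, true_and] at hi
      simp [a, hi]
    · apply Finset.sum_congr rfl
      intro i hi
      simp only [Finset.mem_filter, Finset.mem_univ, true_and] at hi
      simp [a, not_lt.2 hi]
  have hcard1 : ((univ.filter (fun i : Fin m => (i : ℕ) < s)).card : ℝ) = s := by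
    rw [Fin.card_filter_val_lt, min_eq_right hsm.le]
  have hcard2 : ((univ.filter (fun i : Fin m => ¬ (i : ℕ) < s)).card : ℝ) = n := by
    have := Finset.card_filter_add_card_filter_not (s := (univ : Finset (Fin m))) (fun i : Fin m => (i : ℕ) < s)
    rw [Finset.card_univ, Fintype.card_fin] at this
    have h2 := congrArg (Nat.cast : ℕ → ℝ) this
    rw [Nat.cast_add, hcard1] at h2
    linarith
  have hbsum : ∑ i, b i = s * (l + l ^ 2 / (1 - 2 * l)) + n * (-(l * z) + (l * z) ^ 2) := by
    simp only [b]
    rw [Finset.sum_ite, Finset.sum_const, Finset.sum_const, nsmul_eq_mul, nsmul_eq_mul,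
      hcard1, hcard2]
  have hbound : ∑ i, b i ≤ -ε ^ 2 := by
    rw [hbsum]
    have hnz : n * z = ζ * s := by rw [hz]; field_simp
    have hV : s + n * z ^ 2 ≤ W ^ 2 := by
      have e1 : Real.sqrt s ^ 2 = s := Real.sq_sqrt hs0.le
      have e2 : Real.sqrt n ^ 2 = n := Real.sq_sqrt hn0.le
      have e3 : (ζ * s / Real.sqrt n) ^ 2 = n * z ^ 2 := by
        rw [div_pow, e2, hz]; field_simp
      have e4 : 0 ≤ Real.sqrt s * (ζ * s / Real.sqrt n) := by positivity
      have e5 : W ^ 2 = Real.sqrt s ^ 2 + 2 * (Real.sqrt s * (ζ * s / Real.sqrt n)) +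
          (ζ * s / Real.sqrt n) ^ 2 := by rw [hW]; ring
      rw [e5, e1, e3]
      linarith
    have h1 : (l * z) ^ 2 ≤ l ^ 2 / (1 - 2 * l) * z ^ 2 := by
      rw [mul_pow]
      apply mul_le_mul_of_nonneg_right _ (sq_nonneg z)
      rw [le_div_iff₀ hlp]
      exact mul_le_of_le_one_right (sq_nonneg l) (by linarith)
    have h2 : l ^ 2 / (1 - 2 * l) * (s + n * z ^ 2) ≤ l ^ 2 / (1 - 2 * l) * W ^ 2 :=
      mul_le_mul_of_nonneg_left hV (by positivity)
    have h3 : l ^ 2 / (1 - 2 * l) * W ^ 2 - l * (2 * ε ^ 2 + 2 * W * ε) = -ε ^ 2 := by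
      rw [hl2, hl]
      field_simp
      ring
    rw [hquad] at h3
    have h4 := mul_le_mul_of_nonneg_left h1 hn0.le
    have h5 : n * (l * z) = l * (ζ * s) := by rw [← hnz]; ring
    generalize l ^ 2 / (1 - 2 * l) = d at *
    have e6 : s * (l + d) + n * (-(l * z) + (l * z) ^ 2) =
      s * l + s * d - n * (l * z) + n * (l * z) ^ 2 := by ring
    have e7 : n * (d * z ^ 2) + s * d = d * (s + n * z ^ 2) := by ring
    have e8 : l * (s * (ζ - 1)) = l * (ζ * s) - s * l := by ring
    rw [e6, h5]
    linarith
  have hch := aux_chernoff a b ha hb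
  have huniq := aux_unique ν _ hν (aux_gauss (lt_of_le_of_lt (Nat.zero_le s) hsm))
  have hmeas : Measurable (fun x : EuclideanSpace ℝ (Fin m) => ‖x‖⁻¹ • x) := by fun_prop
  let E : Set (EuclideanSpace ℝ (Fin m)) := {q | 0 < ∑ i, a i * q i ^ 2}
  have hE : MeasurableSet E := measurableSet_lt (by fun_prop) (by fun_prop)
  have hsub : ν {q | t₃ ^ 2 < (∑ i ∈ univ.filter (fun i : Fin m => (i : ℕ) < s), q i ^ 2) +
        c * ∑ i ∈ univ.filter (fun i : Fin m => s ≤ (i : ℕ)), q i ^ 2} ≤ ν E := by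
    apply measure_mono_ae
    have hnorm : ∀ᵐ y ∂ν, ‖y‖ = 1 := hν.2.1
    filter_upwards [hnorm] with q hq hqE
    change t₃ ^ 2 < _ at hqE
    change 0 < ∑ i, a i * q i ^ 2
    rw [hasum]
    have h1 : (∑ i ∈ univ.filter (fun i : Fin m => (i : ℕ) < s), q i ^ 2) +
        ∑ i ∈ univ.filter (fun i : Fin m => s ≤ (i : ℕ)), q i ^ 2 = 1 := by
      have := EuclideanSpace.real_norm_sq_eq q
      rw [hq, ← Finset.sum_filter_add_sum_filter_not univ (fun i : Fin m => (i : ℕ) < s)] at this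
      simp only [not_lt] at this
      linarith
    set X := ∑ i ∈ univ.filter (fun i : Fin m => (i : ℕ) < s), q i ^ 2
    set Y := ∑ i ∈ univ.filter (fun i : Fin m => s ≤ (i : ℕ)), q i ^ 2
    have hzz : z * (1 - t₃ ^ 2) = t₃ ^ 2 - c := by
      rw [hz, hζdef]; field_simp
    have h6 : 0 < (1 - t₃ ^ 2) * (X - z * Y) := by
      have : (1 - t₃ ^ 2) * (X - z * Y) = (1 - t₃ ^ 2) * X - (z * (1 - t₃ ^ 2)) * Y := by ring
      rw [this, hzz]
      have hX : t₃ ^ 2 * (X + Y) < X + c * Y := by rw [h1]; linarith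
      linarith
    have h7 : 0 < X - z * Y := (mul_pos_iff_of_pos_left ht3).1 h6
    have := mul_pos hl0 h7
    linarith
  refine hsub.trans ?_
  rw [huniq, Measure.map_apply hmeas hE]
  have hsub2 : (fun x : EuclideanSpace ℝ (Fin m) => ‖x‖⁻¹ • x) ⁻¹' E ⊆ E := by
    intro x hx
    change 0 < ∑ i, a i * (‖x‖⁻¹ * x i) ^ 2 at hx
    change 0 < ∑ i, a i * x i ^ 2
    have : ∑ i, a i * (‖x‖⁻¹ * x i) ^ 2 = (‖x‖⁻¹) ^ 2 * ∑ i, a i * x i ^ 2 := by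
      rw [Finset.mul_sum]
      apply Finset.sum_congr rfl
      intros; ring
    rw [this] at hx
    exact pos_of_mul_pos_right hx (sq_nonneg _)
  refine (measure_mono hsub2).trans ?_
  rw [← ProbabilityTheory.map_pi_eq_stdGaussian, Measure.map_apply (by fun_prop) hE]
  refine hch.trans (ENNReal.ofReal_le_ofReal ?_)
  have h8 := Real.exp_le_exp.2 hbound
  have h9 := Real.exp_pos (-ε ^ 2)
  linarith
end

section
/- Let U ∈ ℝ^{M×s}, Û₁ ∈ ℝ^{M×(m−s)}, and Ũ₂,…,Ũ_K be matrices such that both [U, Û₁] and [U, Ũ₂,…,Ũ_K] have orthonormal columns, and suppose the ℓ₂ operator norm of Û₁ᵀŨ_k is at most t₂ for every k = 2,…,K. Let q = Uα + Û₁β with ‖α‖₂² + ‖β‖₂² = 1, and let δ be any unit ℓ₂-norm vector in the column span of [U, Ũ₂,…,Ũ_K]. Then ⟨q, δ⟩² ≤ ‖α‖₂² + (K−1)t₂²‖β‖₂². -/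
open scoped RealInnerProductSpace

/-- Let `U ∈ ℝ^{M×s}`, `Û₁ ∈ ℝ^{M×(m−s)}`, and `Ũ₂,…,Ũ_K` be such that both
`[U, Û₁]` and `[U, Ũ₂,…,Ũ_K]` have orthonormal columns, and the largest singular value of
`Û₁ᵀŨ_k` is at most `t₂` for every `k` (equivalently `|⟪x, y⟫| ≤ t₂‖x‖‖y‖` for all
`x ∈ span(Û₁)`, `y ∈ span(Ũ_k)`).  Let `q = Uα + Û₁β` with `‖α‖² + ‖β‖² = 1` and let `δ`
be a unit vector in the column span of `[U, Ũ₂,…,Ũ_K]`.  Then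
`⟪q, δ⟫² ≤ ‖α‖² + (K−1)t₂²‖β‖²`.  The `K−1` matrices `Ũ₂,…,Ũ_K` are indexed by
`Fin (K−1)`. -/
theorem stmt_15 (M m s K : ℕ) (hK : 2 ≤ K) (hsm : s ≤ m) (p : Fin (K - 1) → ℕ)
    (U : Fin s → EuclideanSpace ℝ (Fin M))
    (Uh₁ : Fin (m - s) → EuclideanSpace ℝ (Fin M))
    (Ut : (k : Fin (K - 1)) → Fin (p k) → EuclideanSpace ℝ (Fin M))
    (hUUh₁ : Orthonormal ℝ (Sum.elim U Uh₁))
    (hUUt : Orthonormal ℝ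
      (Sum.elim U (fun x : Σ k : Fin (K - 1), Fin (p k) => Ut x.1 x.2)))
    (t₂ : ℝ)
    (hop : ∀ k : Fin (K - 1), ∀ x ∈ Submodule.span ℝ (Set.range Uh₁),
      ∀ y ∈ Submodule.span ℝ (Set.range (Ut k)), |⟪x, y⟫| ≤ t₂ * ‖x‖ * ‖y‖)
    (α : Fin s → ℝ) (β : Fin (m - s) → ℝ)
    (hnorm : (∑ i, α i ^ 2) + ∑ j, β j ^ 2 = 1)
    (q : EuclideanSpace ℝ (Fin M))
    (hq : q = (∑ i, α i • U i) + ∑ j, β j • Uh₁ j)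
    (δ : EuclideanSpace ℝ (Fin M)) (hδ : ‖δ‖ = 1)
    (hδmem : δ ∈ Submodule.span ℝ (Set.range U) ⊔
      ⨆ k, Submodule.span ℝ (Set.range (Ut k))) :
    ⟪q, δ⟫ ^ 2 ≤ (∑ i, α i ^ 2) + ((K : ℝ) - 1) * t₂ ^ 2 * ∑ j, β j ^ 2 := by
  classical
  obtain ⟨u, hu, y', hy', rfl⟩ := Submodule.mem_sup.1 hδmem
  obtain ⟨f, hf, rfl⟩ := (Submodule.mem_iSup_iff_exists_finsupp _ _).1 hy'
  set A := ∑ i, α i • U i with hA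
  set B := ∑ j, β j • Uh₁ j with hB
  have hAm : A ∈ Submodule.span ℝ (Set.range U) :=
    Submodule.sum_mem _ fun i _ => Submodule.smul_mem _ _ (Submodule.subset_span ⟨i, rfl⟩)
  have hBm : B ∈ Submodule.span ℝ (Set.range Uh₁) :=
    Submodule.sum_mem _ fun i _ => Submodule.smul_mem _ _ (Submodule.subset_span ⟨i, rfl⟩)
  have hfs : (f.sum fun _ xi => xi) = ∑ k, f k := Finsupp.sum_fintype _ _ (fun _ => rfl)
  rw [hfs] at hδ ⊢
  have hoU : Orthonormal ℝ U := by
    simpa [Function.comp_def] using hUUh₁.comp Sum.inl Sum.inl_injective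
  have hoUh : Orthonormal ℝ Uh₁ := by
    simpa [Function.comp_def] using hUUh₁.comp Sum.inr Sum.inr_injective
  have hAn : ‖A‖ ^ 2 = ∑ i, α i ^ 2 := by
    rw [← real_inner_self_eq_norm_sq, hA, hoU.inner_sum]
    simp [pow_two]
  have hBn : ‖B‖ ^ 2 = ∑ i, β i ^ 2 := by
    rw [← real_inner_self_eq_norm_sq, hB, hoUh.inner_sum]
    simp [pow_two]
  have o1 : ∀ x ∈ Submodule.span ℝ (Set.range U), ∀ z ∈ Submodule.span ℝ (Set.range Uh₁),
      ⟪x, z⟫ = 0 := by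
    rw [← Submodule.isOrtho_iff_inner_eq, Submodule.isOrtho_span]
    rintro _ ⟨i, rfl⟩ _ ⟨j, rfl⟩
    exact hUUh₁.2 (i := Sum.inl i) (j := Sum.inr j) (by simp)
  have o2 : ∀ k, ∀ x ∈ Submodule.span ℝ (Set.range U),
      ∀ z ∈ Submodule.span ℝ (Set.range (Ut k)), ⟪x, z⟫ = 0 := by
    intro k
    rw [← Submodule.isOrtho_iff_inner_eq, Submodule.isOrtho_span]
    rintro _ ⟨i, rfl⟩ _ ⟨j, rfl⟩
    exact hUUt.2 (i := Sum.inl i) (j := Sum.inr ⟨k, j⟩) (by simp)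
  have o3 : ∀ k l, k ≠ l → ∀ x ∈ Submodule.span ℝ (Set.range (Ut k)),
      ∀ z ∈ Submodule.span ℝ (Set.range (Ut l)), ⟪x, z⟫ = 0 := by
    intro k l hkl
    rw [← Submodule.isOrtho_iff_inner_eq, Submodule.isOrtho_span]
    rintro _ ⟨i, rfl⟩ _ ⟨j, rfl⟩
    refine hUUt.2 (i := Sum.inr ⟨k, i⟩) (j := Sum.inr ⟨l, j⟩) ?_
    intro h
    exact hkl (congrArg Sigma.fst (Sum.inr_injective h))
  have huf : ⟪u, ∑ k, f k⟫ = 0 := by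
    rw [inner_sum]
    exact Finset.sum_eq_zero fun k _ => o2 k u hu _ (hf k)
  have hff : ‖∑ k, f k‖ ^ 2 = ∑ k, ‖f k‖ ^ 2 := by
    rw [← real_inner_self_eq_norm_sq, sum_inner]
    refine Finset.sum_congr rfl fun k _ => ?_
    rw [inner_sum, Finset.sum_eq_single k, real_inner_self_eq_norm_sq]
    · intro l _ hl
      exact o3 k l hl.symm _ (hf k) _ (hf l)
    · simp
  have hone : ‖u‖ ^ 2 + ∑ k, ‖f k‖ ^ 2 = 1 := by
    have h := norm_add_sq_real u (∑ k, f k)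
    rw [huf, hδ, hff] at h
    linarith
  have hAf : ⟪A, ∑ k, f k⟫ = 0 := by
    rw [inner_sum]
    exact Finset.sum_eq_zero fun k _ => o2 k A hAm _ (hf k)
  have hBu : ⟪B, u⟫ = 0 := by
    rw [real_inner_comm]
    exact o1 u hu B hBm
  have hqd : ⟪q, u + ∑ k, f k⟫ = ⟪A, u⟫ + ⟪B, ∑ k, f k⟫ := by
    rw [hq, inner_add_left, inner_add_right, inner_add_right, hAf, hBu]
    ring
  have hBf : |⟪B, ∑ k, f k⟫| ≤ t₂ * ‖B‖ * ∑ k, ‖f k‖ := by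
    rw [inner_sum, Finset.mul_sum]
    exact (Finset.abs_sum_le_sum_abs _ _).trans
      (Finset.sum_le_sum fun k _ => hop k B hBm _ (hf k))
  have hle : |⟪q, u + ∑ k, f k⟫| ≤ ‖A‖ * ‖u‖ + t₂ * ‖B‖ * ∑ k, ‖f k‖ := by
    rw [hqd]
    exact (abs_add_le _ _).trans (add_le_add (abs_real_inner_le_norm _ _) hBf)
  have hcs : (∑ k, ‖f k‖) ^ 2 ≤ ((K : ℝ) - 1) * ∑ k, ‖f k‖ ^ 2 := by
    have h := sq_sum_le_card_mul_sum_sq (s := Finset.univ) (f := fun k => ‖f k‖)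
    rw [Finset.card_univ, Fintype.card_fin, Nat.cast_sub (by omega)] at h
    simpa using h
  have hn : (0 : ℝ) < (K : ℝ) - 1 := by
    have : (2 : ℝ) ≤ K := by exact_mod_cast hK
    linarith
  have hsq := pow_le_pow_left₀ (abs_nonneg _) hle 2
  rw [sq_abs] at hsq
  rw [← hAn, ← hBn]
  refine hsq.trans ?_
  generalize (∑ k, ‖f k‖) = S at *
  generalize (∑ k, ‖f k‖ ^ 2) = Q at *
  generalize (K : ℝ) - 1 = n at *
  generalize ‖A‖ = a at *
  generalize ‖B‖ = b at *
  generalize ‖u‖ = v at *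
  have key : 2 * (a * v * (t₂ * b) * S) ≤ a ^ 2 * Q + n * (t₂ * b) ^ 2 * v ^ 2 := by
    refine le_of_mul_le_mul_left ?_ hn
    nlinarith [sq_nonneg (a * S - n * (t₂ * b) * v),
      mul_le_mul_of_nonneg_left hcs (sq_nonneg a)]
  have k2 := mul_le_mul_of_nonneg_left hcs (sq_nonneg (t₂ * b))
  calc (a * v + t₂ * b * S) ^ 2 ≤ (a ^ 2 + n * t₂ ^ 2 * b ^ 2) * (v ^ 2 + Q) := by
        nlinarith
    _ = _ := by rw [hone, mul_one]
end

section
/- Let b be a random vector uniformly distributed on the unit sphere S^{m−1} of ℝ^m, let 1 ≤ s < m be integers, and let κ be a constant with (m−s)/m < κ < 1. Then P[ Σ_{i=1}^{m−s} b_i² ≥ κ ] ≤ 2e^{−ε²}, where ε = (m−s)B / (A + √(A² + 2(m−s)B)), A = √(m−s) + κ√s/(1−κ), and B = κs/((1−κ)(m−s)) − 1. -/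
open MeasureTheory Finset

open ProbabilityTheory

namespace SphereAux

lemma charFun_eq_of_norm_eq {m : ℕ} {ν : Measure (EuclideanSpace ℝ (Fin m))}
    (hν : ∀ O : EuclideanSpace ℝ (Fin m) ≃ₗᵢ[ℝ] EuclideanSpace ℝ (Fin m),
      Measure.map O ν = ν) {u v : EuclideanSpace ℝ (Fin m)} (h : ‖u‖ = ‖v‖) :
    charFun ν u = charFun ν v := by
  let O := Submodule.reflection (ℝ ∙ (u - v))ᗮ
  have hO : O u = v := Submodule.reflection_sub h
  conv_rhs => rw [← hν O]
  rw [charFun_apply, charFun_apply, integral_map O.continuous.aemeasurable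
    (Measurable.aestronglyMeasurable (by fun_prop))]
  simp_rw [← hO, LinearIsometryEquiv.inner_map_map]

lemma charFun_smul_eq {m : ℕ} {ν ν' : Measure (EuclideanSpace ℝ (Fin m))}
    (hν : IsUniformOnSphere ν) (hν' : IsUniformOnSphere ν') (u : EuclideanSpace ℝ (Fin m)) :
    ∫ y, charFun ν (‖u‖ • y) ∂ν' = charFun ν u := by
  obtain ⟨h1, h2, h3⟩ := hν
  obtain ⟨h1', h2', h3'⟩ := hν'
  have : ∀ᵐ y ∂ν', charFun ν (‖u‖ • y) = charFun ν u := by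
    have h : ∀ᵐ y ∂ν', ‖y‖ = 1 := h2'
    filter_upwards [h] with y hy
    apply charFun_eq_of_norm_eq h3
    simp [norm_smul, hy]
  rw [integral_congr_ae this]
  simp

lemma unique {m : ℕ} {ν ν' : Measure (EuclideanSpace ℝ (Fin m))}
    (hν : IsUniformOnSphere ν) (hν' : IsUniformOnSphere ν') : ν = ν' := by
  have := hν.1
  have := hν'.1
  apply Measure.ext_of_charFun
  ext u
  rw [← charFun_smul_eq hν hν' u, ← charFun_smul_eq hν' hν u]
  simp_rw [charFun_apply]
  rw [integral_integral_swap]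
  · simp_rw [real_inner_smul_right, real_inner_comm]
  · refine Integrable.of_bound (C := 1) (Measurable.aestronglyMeasurable (by fun_prop)) ?_
    refine Filter.Eventually.of_forall fun p => ?_
    simp only [Function.uncurry]
    rw [Complex.norm_exp_ofReal_mul_I]

lemma gauss_zero {m : ℕ} (hm : 0 < m) :
    stdGaussian (EuclideanSpace ℝ (Fin m)) {0} = 0 := by
  have : Nonempty (Fin m) := ⟨⟨0, hm⟩⟩
  have := nullSingletonClass_gaussianReal (μ := 0) (v := 1) one_ne_zero
  rw [← map_pi_eq_stdGaussian, Measure.map_apply (by fun_prop) (measurableSet_singleton _)]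
  have : (WithLp.toLp 2 : (Fin m → ℝ) → EuclideanSpace ℝ (Fin m)) ⁻¹' {0} = {0} := by
    ext x; simp
  rw [this]
  exact measure_singleton _

lemma unif_gauss {m : ℕ} (hm : 0 < m) :
    IsUniformOnSphere ((stdGaussian (EuclideanSpace ℝ (Fin m))).map (fun x => ‖x‖⁻¹ • x)) := by
  have hme : Measurable (fun x : EuclideanSpace ℝ (Fin m) => ‖x‖⁻¹ • x) := by fun_prop
  refine ⟨Measure.isProbabilityMeasure_map hme.aemeasurable, ?_, fun O => ?_⟩
  · rw [Measure.map_apply hme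
      (measurableSet_eq_fun measurable_norm measurable_const).compl]
    refine measure_mono_null ?_ (gauss_zero hm)
    intro x hx
    by_contra h
    apply hx
    have : ‖x‖ ≠ 0 := by simpa using h
    simp [norm_smul, this]
  · conv_rhs => rw [← stdGaussian_map O]
    rw [Measure.map_map (by fun_prop) hme, Measure.map_map hme (by fun_prop)]
    congr 1
    ext1 x
    simp

lemma cone {m : ℕ} (hm : 0 < m) {ν : Measure (EuclideanSpace ℝ (Fin m))}
    (hν : IsUniformOnSphere ν) (S : Finset (Fin m)) (κ : ℝ) :
    ν {b | κ ≤ ∑ i ∈ S, b i ^ 2} ≤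
      Measure.pi (fun _ : Fin m => gaussianReal 0 1) {x | κ * ∑ i, x i ^ 2 ≤ ∑ i ∈ S, x i ^ 2} := by
  have hme : Measurable (fun x : EuclideanSpace ℝ (Fin m) => ‖x‖⁻¹ • x) := by fun_prop
  rw [unique hν (unif_gauss hm), Measure.map_apply hme
    (measurableSet_le measurable_const (by fun_prop)), ← map_pi_eq_stdGaussian,
    Measure.map_apply (by fun_prop) (hme (measurableSet_le measurable_const (by fun_prop)))]
  apply measure_mono
  intro x hx
  simp only [Set.mem_preimage, Set.mem_ofPred_eq, PiLp.smul_apply, smul_eq_mul, mul_pow,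
    ← Finset.mul_sum] at hx ⊢
  have h2 : ‖(WithLp.toLp 2 x : EuclideanSpace ℝ (Fin m))‖ ^ 2 = ∑ i, x i ^ 2 := by
    rw [EuclideanSpace.real_norm_sq_eq]
  rw [inv_pow, h2] at hx
  rcases (Finset.sum_nonneg (fun i _ => sq_nonneg (x i)) : 0 ≤ ∑ i, x i ^ 2).eq_or_lt with h0 | h0
  · rw [← h0, mul_zero]
    exact Finset.sum_nonneg (fun i _ => sq_nonneg (x i))
  · rwa [inv_mul_eq_div, le_div_iff₀ h0] at hx

lemma mgf_sq {c : ℝ} (hc : c < 1 / 2) :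
    ∫ x, Real.exp (c * x ^ 2) ∂(gaussianReal 0 1) = (√(1 - 2 * c))⁻¹ := by
  rw [integral_gaussianReal_eq_integral_smul one_ne_zero]
  have : ∀ x : ℝ, gaussianPDFReal 0 1 x • Real.exp (c * x ^ 2) =
      (√(2 * Real.pi))⁻¹ * Real.exp (-(1 / 2 - c) * x ^ 2) := by
    intro x
    simp only [gaussianPDFReal_def, smul_eq_mul, mul_assoc, ← Real.exp_add]
    simp only [NNReal.coe_one, mul_one, sub_zero]
    congr 2
    ring
  simp_rw [this]
  rw [integral_const_mul, integral_gaussian, ← Real.sqrt_inv, ← Real.sqrt_inv,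
    ← Real.sqrt_mul (by positivity)]
  congr 1
  have := Real.pi_pos
  have : 1 / 2 - c ≠ 0 := by linarith
  have : 1 - 2 * c ≠ 0 := by intro h; apply this; linarith
  field_simp

lemma chernoff {m : ℕ} (S : Finset (Fin m)) {c d : ℝ} (hc : c < 1 / 2)
    (hd : (√(1 - 2 * c))⁻¹ ≤ Real.exp d) (T : ℝ) :
    Measure.pi (fun _ : Fin m => gaussianReal 0 1) {x | T ≤ c * ∑ i ∈ S, x i ^ 2} ≤
      ENNReal.ofReal (Real.exp (-T + S.card * d)) := by
  have hI : ∫ x : Fin m → ℝ, Real.exp (1 * (c * ∑ i ∈ S, x i ^ 2))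
      ∂(Measure.pi (fun _ : Fin m => gaussianReal 0 1)) = (√(1 - 2 * c))⁻¹ ^ S.card := by
    have : ∀ x : Fin m → ℝ, Real.exp (1 * (c * ∑ i ∈ S, x i ^ 2)) =
        ∏ i, (fun y : ℝ => Real.exp ((if i ∈ S then c else 0) * y ^ 2)) (x i) := by
      intro x
      rw [← Real.exp_sum, one_mul, Finset.mul_sum]
      congr 1
      simp [ite_mul, Finset.sum_ite_mem]
    simp_rw [this]
    rw [integral_fintype_prod_eq_prod
      (f := fun i (y : ℝ) => Real.exp ((if i ∈ S then c else 0) * y ^ 2))]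
    have : ∀ i : Fin m, ∫ y, Real.exp ((if i ∈ S then c else 0) * y ^ 2) ∂(gaussianReal 0 1) =
        if i ∈ S then (√(1 - 2 * c))⁻¹ else 1 := by
      intro i
      split_ifs
      · exact mgf_sq hc
      · simp
    simp_rw [this]
    simp [Finset.prod_ite_mem]
  have hpos : 0 < (√(1 - 2 * c))⁻¹ := inv_pos.2 (Real.sqrt_pos.2 (by linarith))
  have hint : Integrable (fun x : Fin m → ℝ => Real.exp (1 * (c * ∑ i ∈ S, x i ^ 2)))
      (Measure.pi (fun _ : Fin m => gaussianReal 0 1)) := by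
    apply Integrable.of_integral_ne_zero
    rw [hI]
    positivity
  have h := measure_ge_le_exp_mul_mgf T zero_le_one hint
  rw [mgf, hI] at h
  rw [← ofReal_measureReal]
  apply ENNReal.ofReal_le_ofReal
  refine h.trans ?_
  rw [Real.exp_add, neg_one_mul, Real.exp_nat_mul]
  gcongr

lemma bound_up {c : ℝ} (h0 : 0 ≤ c) (hc : c < 1 / 2) :
    (√(1 - 2 * c))⁻¹ ≤ Real.exp (c + c ^ 2 / (1 - 2 * c)) := by
  have hp : 0 < 1 - 2 * c := by linarith
  rw [← Real.sqrt_inv]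
  refine Real.sqrt_le_iff.2 ⟨(Real.exp_pos _).le, ?_⟩
  rw [← Real.exp_nat_mul]
  refine (Real.log_le_iff_le_exp (by positivity)).1 ?_
  have hv : 1 ≤ (1 - 2 * c)⁻¹ := (one_le_inv₀ hp).2 (by linarith)
  have h := Real.self_le_sinh_iff.2 (Real.log_nonneg hv)
  rw [Real.sinh_log (by positivity)] at h
  refine h.trans (le_of_eq ?_)
  rw [inv_inv]
  push_cast
  field_simp
  ring

lemma bound_dn {l : ℝ} (h0 : 0 ≤ l) :
    (√(1 - 2 * (-l)))⁻¹ ≤ Real.exp (-l + l ^ 2) := by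
  have hp : 0 < 1 - 2 * (-l) := by linarith
  rw [← Real.sqrt_inv]
  refine Real.sqrt_le_iff.2 ⟨(Real.exp_pos _).le, ?_⟩
  rw [← Real.exp_nat_mul]
  refine (Real.log_le_iff_le_exp (by positivity)).1 ?_
  rw [Real.log_inv]
  have h := Real.le_log_one_add_of_nonneg (x := 2 * l) (by linarith)
  have h2 : 2 * l - 2 * l ^ 2 ≤ 2 * (2 * l) / (2 * l + 2) := by
    rw [le_div_iff₀ (by linarith)]
    nlinarith [pow_nonneg h0 3]
  rw [show 1 - 2 * (-l) = 1 + 2 * l by ring]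
  push_cast
  linarith

lemma tail_up {m : ℕ} (S : Finset (Fin m)) (hS : 0 < S.card) {e : ℝ} (he : 0 < e) :
    Measure.pi (fun _ : Fin m => gaussianReal 0 1)
      {x | (S.card : ℝ) + 2 * √(S.card : ℝ) * e + 2 * e ^ 2 ≤ ∑ i ∈ S, x i ^ 2} ≤
      ENNReal.ofReal (Real.exp (-e ^ 2)) := by
  have hr0 : 0 < √(S.card : ℝ) := Real.sqrt_pos.2 (by exact_mod_cast hS)
  have hr2 : (S.card : ℝ) = √(S.card : ℝ) ^ 2 := (Real.sq_sqrt (by positivity)).symm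
  generalize √(S.card : ℝ) = r at hr0 hr2 ⊢
  set c := e / (r + 2 * e) with hcdef
  have hc0 : 0 < c := by positivity
  have hc : c < 1 / 2 := by
    rw [hcdef, div_lt_div_iff₀ (by positivity) (by positivity)]; linarith
  have h := chernoff S hc (bound_up hc0.le hc) (c * (r ^ 2 + 2 * r * e + 2 * e ^ 2))
  rw [hr2] at h ⊢
  have heq : -(c * (r ^ 2 + 2 * r * e + 2 * e ^ 2)) + r ^ 2 * (c + c ^ 2 / (1 - 2 * c)) = -e ^ 2 := by
    have : 1 - 2 * c = r / (r + 2 * e) := by rw [hcdef]; field_simp; ring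
    rw [this, hcdef]
    field_simp
    ring
  rw [heq] at h
  refine le_trans (measure_mono ?_) h
  intro x hx
  exact mul_le_mul_of_nonneg_left hx hc0.le

lemma tail_dn {m : ℕ} (S : Finset (Fin m)) (hS : 0 < S.card) {e : ℝ} (he : 0 < e) :
    Measure.pi (fun _ : Fin m => gaussianReal 0 1)
      {x | ∑ i ∈ S, x i ^ 2 ≤ (S.card : ℝ) - 2 * √(S.card : ℝ) * e} ≤
      ENNReal.ofReal (Real.exp (-e ^ 2)) := by
  have hr0 : 0 < √(S.card : ℝ) := Real.sqrt_pos.2 (by exact_mod_cast hS)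
  have hr2 : (S.card : ℝ) = √(S.card : ℝ) ^ 2 := (Real.sq_sqrt (by positivity)).symm
  generalize √(S.card : ℝ) = r at hr0 hr2 ⊢
  have hc0 : 0 < e / r := by positivity
  have h := chernoff S (c := -(e / r)) (by linarith) (bound_dn hc0.le)
    (-(e / r) * (r ^ 2 - 2 * r * e))
  rw [hr2] at h ⊢
  have heq : -(-(e / r) * (r ^ 2 - 2 * r * e)) + r ^ 2 * (-(e / r) + (e / r) ^ 2) = -e ^ 2 := by
    field_simp
    ring
  rw [heq] at h
  refine le_trans (measure_mono ?_) h
  intro x hx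
  exact mul_le_mul_of_nonpos_left (by simpa using hx) (neg_nonpos.2 hc0.le)

end SphereAux

/-- Let `b` be uniform on `S^{m−1}`, `1 ≤ s < m`, and `(m−s)/m < κ < 1`.
Then `P[∑_{i=1}^{m−s} b_i² ≥ κ] ≤ 2e^{−ε²}`, where
`ε = (m−s)B/(A + √(A² + 2(m−s)B))`, `A = √(m−s) + κ√s/(1−κ)`,
`B = κs/((1−κ)(m−s)) − 1`. -/
theorem stmt_17 (m s : ℕ) (hs : 1 ≤ s) (hsm : s < m)
    (ν : Measure (EuclideanSpace ℝ (Fin m))) (hν : IsUniformOnSphere ν)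
    (κ : ℝ) (hκl : ((m : ℝ) - s) / m < κ) (hκu : κ < 1)
    (A B ε : ℝ)
    (hA : A = Real.sqrt ((m : ℝ) - s) + κ * Real.sqrt s / (1 - κ))
    (hB : B = κ * s / ((1 - κ) * ((m : ℝ) - s)) - 1)
    (hε : ε = ((m : ℝ) - s) * B / (A + Real.sqrt (A ^ 2 + 2 * ((m : ℝ) - s) * B))) :
    ν {b | κ ≤ ∑ i ∈ univ.filter (fun i : Fin m => (i : ℕ) < m - s), b i ^ 2} ≤
      ENNReal.ofReal (2 * Real.exp (-ε ^ 2)) := by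
  have hm : 0 < m := by omega
  set S := univ.filter (fun i : Fin m => (i : ℕ) < m - s) with hSdef
  have hScard : S.card = m - s := by
    rw [hSdef, Fin.card_filter_val_lt]; omega
  have hSc : Sᶜ.card = s := by
    rw [Finset.card_compl, hScard, Fintype.card_fin]; omega
  have hcast : ((m - s : ℕ) : ℝ) = (m : ℝ) - s := by push_cast [hsm.le]; ring
  refine (SphereAux.cone hm hν S κ).trans ?_
  have hm0 : (0 : ℝ) < m := by exact_mod_cast hm
  have hs0 : (0 : ℝ) < s := by exact_mod_cast hs
  have hn0 : (0 : ℝ) < (m : ℝ) - s := by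
    have : (s : ℝ) < m := by exact_mod_cast hsm
    linarith
  have hκ0 : 0 < κ := lt_trans (by positivity) hκl
  have h1κ : 0 < 1 - κ := by linarith
  rw [div_lt_iff₀ hm0] at hκl
  set n : ℝ := (m : ℝ) - s with hn
  have hnB : n * B = κ * s / (1 - κ) - n := by
    rw [hB]; field_simp
  have hnBpos : 0 < n * B := by
    rw [hnB, sub_pos, lt_div_iff₀ h1κ]
    nlinarith
  have hApos : 0 < A := by rw [hA]; positivity
  set D := √(A ^ 2 + 2 * n * B) with hD
  have hD2 : D ^ 2 = A ^ 2 + 2 * n * B := Real.sq_sqrt (by nlinarith)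
  have hD0 : 0 ≤ D := Real.sqrt_nonneg _
  have he : 0 < ε := by rw [hε]; positivity
  have hε2 : ε = (D - A) / 2 := by
    rw [hε, div_eq_div_iff (by positivity) (by norm_num)]
    nlinarith
  have hquad : 2 * ε ^ 2 + 2 * A * ε = n * B := by
    rw [hε2]; nlinarith
  have hkey : (1 - κ) * (n + 2 * √n * ε + 2 * ε ^ 2) = κ * (s - 2 * √s * ε) := by
    have h1 : (1 - κ) * A = (1 - κ) * √n + κ * √s := by rw [hA]; field_simp
    have h2 : (1 - κ) * (n * B) = κ * s - (1 - κ) * n := by rw [hnB]; field_simp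
    have h3 := congrArg (fun z => (1 - κ) * z) hquad
    linear_combination h3 + h2 - 2 * ε * h1
  have hup := SphereAux.tail_up S (by omega) he
  have hdn := SphereAux.tail_dn Sᶜ (by omega) he
  rw [hScard, hcast] at hup
  rw [hSc] at hdn
  rw [two_mul, ENNReal.ofReal_add (Real.exp_pos _).le (Real.exp_pos _).le]
  refine le_trans (le_trans (measure_mono ?_) (measure_union_le _ _)) (add_le_add hup hdn)
  intro x hx
  simp only [Set.mem_ofPred_eq, Set.mem_union] at hx ⊢
  rw [← Finset.sum_add_sum_compl S] at hx
  by_contra! hcon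
  obtain ⟨ha, hb⟩ := hcon
  nlinarith [mul_lt_mul_of_pos_left ha h1κ, mul_lt_mul_of_pos_left hb hκ0]
end
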